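/- arXiv:0707.2813 — 3 statements merged into one kernel-verified Lean document; each statement's English description precedes it below -/
import Mathlib

section
/- For every pair of integers 0 ≤ j, k ≤ n−1, the series ∑_{x∈ℤ} Φ_j(x) Ψ_k(x) converges absolutely, and ∑_{x∈ℤ} Φ_j(x) Ψ_k(x) = δ_{j,k} (equal to 1 if j = k and 0 otherwise). -/
open Complex MeasureTheory
open scoped Real

/-- `Ψ_k(x) = (1/(2πi)) ∮_{|w|=ρ} (w(w−1))^k w^{−(x+2n+1)} e^{aw + b/w} dw`. -/
noncomputable def Psi (n : ℕ) (a b ρ : ℝ) (k : ℕ) (x : ℤ) : ℂ :=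
  (2 * (Real.pi : ℂ) * Complex.I)⁻¹ *
    ∮ w in C(0, ρ), (w * (w - 1)) ^ k * w ^ (-(x + 2 * (n : ℤ) + 1)) *
      Complex.exp ((a : ℂ) * w + (b : ℂ) / w)

/-- `Φ_j(x) = (1/(2πi)) ∮_{|z−1|=r} (2z−1) z^{x+2n} (z(z−1))^{−(j+1)} e^{−az − b/z} dz`. -/
noncomputable def Phi (n : ℕ) (a b r : ℝ) (j : ℕ) (x : ℤ) : ℂ :=
  (2 * (Real.pi : ℂ) * Complex.I)⁻¹ *
    ∮ z in C(1, r), (2 * z - 1) * z ^ (x + 2 * (n : ℤ)) *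
      (z * (z - 1)) ^ (-((j : ℤ) + 1)) *
      Complex.exp (-((a : ℂ) * z) - (b : ℂ) / z)

/-- `f` has a Laurent expansion on the punctured plane with coefficients `c`. -/
def LRep (f : ℂ → ℂ) (c : ℤ → ℂ) : Prop :=
  ∀ z : ℂ, z ≠ 0 → HasSum (fun m : ℤ => c m * z ^ m) (f z)

lemma hsum_congr {ι : Type} {f g : ι → ℂ} {s : ℂ} (h : ∀ i, f i = g i) :
    HasSum f s ↔ HasSum g s := by
  rw [funext h]

/-- the shear of the lattice used to sum a product along antidiagonals -/
def shear : ℤ × ℤ ≃ ℤ × ℤ where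
  toFun p := (p.2, p.1 - p.2)
  invFun p := (p.1 + p.2, p.1)
  left_inv p := by ext <;> simp
  right_inv p := by ext <;> simp

lemma hsum_shear {F : ℤ × ℤ → ℂ} {s : ℂ} (h : HasSum F s) :
    HasSum (fun N : ℤ => ∑' m : ℤ, F (m, N - m)) s := by
  have h4 : HasSum (F ∘ shear) s := shear.hasSum_iff.2 h
  exact h4.prod_fiberwise (fun N => (h4.summable.prod_factor N).hasSum)

lemma hsum_mul {f g : ℤ → ℂ} {s t : ℂ} (h1 : HasSum f s) (h2 : HasSum g t) :
    HasSum (fun p : ℤ × ℤ => f p.1 * g p.2) (s * t) :=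
  h1.mul h2 (summable_mul_of_summable_norm h1.summable.norm h2.summable.norm)

lemma LRep.mul {f g : ℂ → ℂ} (hf : ∃ c, LRep f c) (hg : ∃ c, LRep g c) :
    ∃ c, LRep (fun z => f z * g z) c := by
  obtain ⟨c, hc⟩ := hf
  obtain ⟨d, hd⟩ := hg
  refine ⟨fun N => ∑' m : ℤ, c m * d (N - m), fun z hz => ?_⟩
  have h5 := hsum_shear (hsum_mul (hc z hz) (hd z hz))
  refine (hsum_congr fun N => ?_).1 h5
  rw [← tsum_mul_right]
  refine tsum_congr fun m => ?_
  have : z ^ N = z ^ m * z ^ (N - m) := by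
    rw [← zpow_add₀ hz]
    congr 1
    ring
  rw [this]
  ring

lemma LRep.sub {f g : ℂ → ℂ} (hf : ∃ c, LRep f c) (hg : ∃ c, LRep g c) :
    ∃ c, LRep (fun z => f z - g z) c := by
  obtain ⟨c, hc⟩ := hf
  obtain ⟨d, hd⟩ := hg
  refine ⟨fun N => c N - d N, fun z hz => ?_⟩
  refine (hsum_congr fun N => ?_).1 ((hc z hz).sub (hd z hz))
  ring

lemma LRep.monomial (p : ℤ) : ∃ c, LRep (fun z => z ^ p) c := by
  refine ⟨fun m => if m = p then 1 else 0, fun z hz => ?_⟩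
  convert hasSum_ite_eq p (z ^ p) using 2 with m
  split_ifs with h <;> simp [h]

lemma LRep.pow {f : ℂ → ℂ} (hf : ∃ c, LRep f c) (k : ℕ) : ∃ c, LRep (fun z => f z ^ k) c := by
  induction k with
  | zero => simpa using LRep.monomial 0
  | succ k ih => simpa only [pow_succ] using LRep.mul ih hf

lemma LRep.exp (a : ℂ) : ∃ c, LRep (fun z => Complex.exp (a * z)) c := by
  refine ⟨fun m => if 0 ≤ m then a ^ m.toNat / (m.toNat.factorial : ℂ) else 0, fun z hz => ?_⟩
  have h : HasSum (fun n : ℕ => (a * z) ^ n / (n.factorial : ℂ)) (Complex.exp (a * z)) := by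
    rw [Complex.exp_eq_exp_ℂ]
    exact NormedSpace.expSeries_div_hasSum_exp (a * z)
  have hi : Function.Injective (fun n : ℕ => (n : ℤ)) := Nat.cast_injective
  refine (hi.hasSum_iff ?_).1 ?_
  · intro m hm
    have : ¬ 0 ≤ m := fun h => hm ⟨m.toNat, by simpa using h⟩
    simp [this]
  · convert h using 2 with n
    simp [mul_pow]
    ring

lemma LRep.inv {f : ℂ → ℂ} (hf : ∃ c, LRep f c) : ∃ c, LRep (fun z => f z⁻¹) c := by
  obtain ⟨c, hc⟩ := hf
  refine ⟨fun m => c (-m), fun z hz => ?_⟩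
  have := ((Equiv.neg ℤ).hasSum_iff).2 (hc z⁻¹ (inv_ne_zero hz))
  convert this using 2 with m
  simp

lemma LRep.main (a b : ℂ) (k : ℕ) :
    ∃ c, LRep (fun w => (w * (w - 1)) ^ k * Complex.exp (a * w + b / w)) c := by
  have hid : ∃ c, LRep (fun z => z) c := by simpa using LRep.monomial 1
  have hone : ∃ c, LRep (fun _ => 1) c := by simpa using LRep.monomial 0
  have := LRep.mul (LRep.pow (LRep.mul hid (LRep.sub hid hone)) k)
    (LRep.mul (LRep.exp a) (LRep.inv (LRep.exp b)))
  simpa only [Complex.exp_add, div_eq_mul_inv] using this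

lemma LRep.integral {f : ℂ → ℂ} {c : ℤ → ℂ} (hf : LRep f c) (x₀ : ℂ) (R s t : ℝ) (hR : 0 ≤ R)
    (hs : 0 < s) (ht : 0 < t) (hb : ∀ z ∈ Metric.sphere x₀ R, s ≤ ‖z‖ ∧ ‖z‖ ≤ t)
    (h : ℂ → ℂ) (hh : ContinuousOn h (Metric.sphere x₀ R)) :
    HasSum (fun m : ℤ => c m * ∮ z in C(x₀, R), h z * z ^ m) (∮ z in C(x₀, R), h z * f z) := by
  obtain ⟨B, hB⟩ := (isCompact_sphere x₀ R).exists_bound_of_continuousOn hh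
  have hsum : Summable (fun m : ℤ => ‖c m‖ * (s ^ m + t ^ m)) := by
    have h1 := (hf s (by exact_mod_cast hs.ne')).summable.norm
    have h2 := (hf t (by exact_mod_cast ht.ne')).summable.norm
    convert h1.add h2 using 2 with m
    simp [abs_of_pos hs, abs_of_pos ht]
    ring
  have hz0 : ∀ z ∈ Metric.sphere x₀ R, z ≠ 0 := fun z hz h0 => by
    have := (hb z hz).1
    rw [h0, norm_zero] at this
    linarith
  have hpow : ∀ z ∈ Metric.sphere x₀ R, ∀ m : ℤ, ‖z ^ m‖ ≤ s ^ m + t ^ m := by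
    intro z hz m
    obtain ⟨h1, h2⟩ := hb z hz
    rw [norm_zpow]
    have p1 : 0 < s ^ m := zpow_pos hs m
    have p2 : 0 < t ^ m := zpow_pos ht m
    rcases le_total 0 m with hm | hm
    · have := zpow_le_zpow_left₀ hm (norm_nonneg z) h2
      linarith
    · have h3 : s ^ (-m) ≤ ‖z‖ ^ (-m) := zpow_le_zpow_left₀ (by omega) hs.le h1
      have h4 := inv_anti₀ (zpow_pos hs (-m)) h3
      simp only [zpow_neg, inv_inv] at h4
      linarith
  have hcont : ∀ m : ℤ, ContinuousOn (fun z => c m * (h z * z ^ m)) (Metric.sphere x₀ R) := by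
    intro m
    refine continuousOn_const.mul (hh.mul ?_)
    intro z hz
    exact (continuousAt_zpow₀ z m (Or.inl (hz0 z hz))).continuousWithinAt
  simp only [← circleIntegral.integral_const_mul]
  unfold circleIntegral
  refine intervalIntegral.hasSum_integral_of_dominated_convergence
    (fun m _ => R * (B * (‖c m‖ * (s ^ m + t ^ m)))) ?_ ?_ ?_ ?_ ?_
  · intro m
    have := ContinuousOn.circleIntegrable hR (hcont m)
    exact this.out.aestronglyMeasurable_restrict_uIoc
  · intro m
    refine Filter.Eventually.of_forall fun θ _ => ?_
    have hm := circleMap_mem_sphere x₀ hR θ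
    have e1 := hB _ hm
    have e2 := hpow _ hm m
    have hB0 : 0 ≤ B := (norm_nonneg _).trans e1
    rw [norm_smul, norm_mul, norm_mul]
    have : ‖deriv (circleMap x₀ R) θ‖ = R := by simp [abs_of_nonneg hR]
    rw [this]
    refine mul_le_mul_of_nonneg_left ?_ hR
    calc _ = ‖h (circleMap x₀ R θ)‖ * (‖c m‖ * ‖circleMap x₀ R θ ^ m‖) := by ring
      _ ≤ _ := by gcongr
  · exact Filter.Eventually.of_forall fun θ _ => (hsum.mul_left B).mul_left R
  · exact intervalIntegrable_const
  · refine Filter.Eventually.of_forall fun θ _ => ?_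
    have hm := circleMap_mem_sphere x₀ hR θ
    have := ((hf _ (hz0 _ hm)).mul_left (h (circleMap x₀ R θ))).const_smul
      (deriv (circleMap x₀ R) θ)
    simp only [smul_eq_mul] at this ⊢
    refine (hsum_congr fun m => ?_).1 this
    ring

lemma Psi_eq (n : ℕ) (a b ρ : ℝ) (hρ : 1 < ρ) (k : ℕ) (x : ℤ) (c : ℤ → ℂ)
    (hc : LRep (fun w => (w * (w - 1)) ^ k * Complex.exp (a * w + b / w)) c) :
    Psi n a b ρ k x = c (x + 2 * n) := by
  have hρ0 : 0 < ρ := by linarith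
  have hne : ∀ z ∈ Metric.sphere (0 : ℂ) ρ, z ≠ 0 := fun z hz h0 => by
    simp [h0] at hz; linarith
  have h1 := hc.integral 0 ρ ρ ρ hρ0.le hρ0 hρ0 (fun z hz => by
    have : ‖z‖ = ρ := by simpa using hz
    simp [this]) (fun z => z ^ (-(x + 2 * (n : ℤ) + 1))) (fun z hz =>
      (continuousAt_zpow₀ z _ (Or.inl (hne z hz))).continuousWithinAt)
  have hint : ∀ m : ℤ, (∮ z in C(0, ρ), z ^ (-(x + 2 * (n : ℤ) + 1)) * z ^ m)
      = if m = x + 2 * n then 2 * (Real.pi : ℂ) * Complex.I else 0 := by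
    intro m
    have e : (∮ z in C(0, ρ), z ^ (-(x + 2 * (n : ℤ) + 1)) * z ^ m)
        = ∮ z in C(0, ρ), (z - 0) ^ (m - (x + 2 * (n : ℤ) + 1)) := by
      refine circleIntegral.integral_congr hρ0.le fun z hz => ?_
      simp only [sub_zero]
      rw [← zpow_add₀ (hne z hz)]
      congr 1; ring
    rw [e]
    split_ifs with hm
    · have : m - (x + 2 * (n : ℤ) + 1) = -1 := by omega
      rw [this]
      simp only [zpow_neg_one]
      exact circleIntegral.integral_sub_inv_of_mem_ball (by simpa using hρ0)
    · exact circleIntegral.integral_sub_zpow_of_ne (by omega) _ _ _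
  simp only [hint] at h1
  have h2 : HasSum (fun m : ℤ => c m * if m = x + 2 * n then 2 * (Real.pi : ℂ) * Complex.I else 0)
      (c (x + 2 * n) * (2 * (Real.pi : ℂ) * Complex.I)) := by
    convert hasSum_ite_eq (x + 2 * (n : ℤ)) (c (x + 2 * n) * (2 * (Real.pi : ℂ) * Complex.I))
      using 2 with m
    split_ifs with h <;> simp [h]
  have h3 := h1.unique h2
  unfold Psi
  have e : (∮ w in C(0, ρ), (w * (w - 1)) ^ k * w ^ (-(x + 2 * (n : ℤ) + 1)) *
      Complex.exp ((a : ℂ) * w + (b : ℂ) / w)) = c (x + 2 * n) * (2 * (Real.pi : ℂ) * Complex.I) := by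
    rw [← h3]
    congr 1; ext w; ring
  rw [e, mul_comm, mul_assoc, mul_inv_cancel₀ Complex.two_pi_I_ne_zero, mul_one]

lemma final_integral (r : ℝ) (hr0 : 0 < r) (hr1 : r < 1) (p : ℤ) :
    (∮ z in C(1, r), (2 * z - 1) * (z * (z - 1)) ^ p)
      = if p = -1 then 2 * (Real.pi : ℂ) * Complex.I else 0 := by
  have hne : ∀ z ∈ Metric.closedBall (1 : ℂ) r, z ≠ 0 := fun z hz h0 => by
    simp [h0] at hz; linarith
  have hne1 : ∀ z ∈ Metric.sphere (1 : ℂ) r, z - 1 ≠ 0 := fun z hz h0 => by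
    rw [mem_sphere_iff_norm, h0, norm_zero] at hz; linarith
  have hs : Metric.sphere (1 : ℂ) r ⊆ Metric.closedBall 1 r := Metric.sphere_subset_closedBall
  split_ifs with hp
  · subst hp
    have e : (∮ z in C(1, r), (2 * z - 1) * (z * (z - 1)) ^ (-1 : ℤ))
        = ∮ z in C(1, r), (z⁻¹ + (z - 1)⁻¹) := by
      refine circleIntegral.integral_congr hr0.le fun z hz => ?_
      have h1 := hne z (hs hz)
      have h2 := hne1 z hz
      simp only [zpow_neg_one]
      field_simp
      ring
    have c1 : ContinuousOn (fun z : ℂ => z⁻¹) (Metric.closedBall 1 r) :=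
      continuousOn_id.inv₀ hne
    have c2 : ContinuousOn (fun z : ℂ => (z - 1)⁻¹) (Metric.sphere 1 r) :=
      (continuousOn_id.sub continuousOn_const).inv₀ hne1
    rw [e, circleIntegral.integral_add ((c1.mono hs).circleIntegrable hr0.le)
      (c2.circleIntegrable hr0.le),
      circleIntegral.integral_sub_inv_of_mem_ball (by simpa using hr0),
      Complex.circleIntegral_eq_zero_of_differentiable_on_off_countable hr0.le
        Set.countable_empty c1 (fun z hz => differentiableAt_inv
          (hne z (Metric.ball_subset_closedBall hz.1))), zero_add]
  · have hp' : ((p : ℂ) + 1) ≠ 0 := by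
      intro h
      apply hp
      have : ((p + 1 : ℤ) : ℂ) = 0 := by push_cast; exact h
      have := Int.cast_eq_zero.1 this
      omega
    refine circleIntegral.integral_eq_zero_of_hasDerivWithinAt
      (f := fun z => (z * (z - 1)) ^ (p + 1) / ((p : ℂ) + 1)) hr0.le fun z hz => ?_
    have hu : HasDerivAt (fun z : ℂ => z * (z - 1)) (2 * z - 1) z := by
      have := (hasDerivAt_id z).mul ((hasDerivAt_id z).sub_const 1)
      refine this.congr_deriv ?_
      simp only [id]; ring
    have h1 := (hasDerivAt_zpow (p + 1) (z * (z - 1))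
      (Or.inl (mul_ne_zero (hne z (hs hz)) (hne1 z hz)))).comp z hu
    have h2 := h1.div_const ((p : ℂ) + 1)
    refine HasDerivAt.hasDerivWithinAt ?_
    refine HasDerivAt.congr_deriv (f := fun z : ℂ => (z * (z - 1)) ^ (p + 1) / ((p : ℂ) + 1)) h2 ?_
    push_cast
    rw [add_sub_cancel_right]
    field_simp

/-- biorthogonality `∑_{x∈ℤ} Φ_j(x) Ψ_k(x) = δ_{j,k}` for
`0 ≤ j, k ≤ n−1`, with absolute convergence (flat initial condition). -/
theorem stmt10 (n : ℕ) (hn : 1 ≤ n) (a b : ℝ)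
    (ρ : ℝ) (hρ : 1 < ρ) (r : ℝ) (hr0 : 0 < r) (hr1 : r < 1)
    (j k : ℕ) (hj : j ≤ n - 1) (hk : k ≤ n - 1) :
    Summable (fun x : ℤ => ‖Phi n a b r j x * Psi n a b ρ k x‖) ∧
    ∑' x : ℤ, Phi n a b r j x * Psi n a b ρ k x
      = if j = k then 1 else 0 := by
  obtain ⟨c, hc⟩ := LRep.main a b k
  have hne : ∀ z ∈ Metric.sphere (1 : ℂ) r, z ≠ 0 := fun z hz h0 => by
    simp [h0] at hz; linarith
  have hne1 : ∀ z ∈ Metric.sphere (1 : ℂ) r, z - 1 ≠ 0 := fun z hz h0 => by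
    rw [mem_sphere_iff_norm, h0, norm_zero] at hz; linarith
  have hcont : ContinuousOn (fun z : ℂ => (2 * z - 1) * (z * (z - 1)) ^ (-((j : ℤ) + 1)) *
      Complex.exp (-((a : ℂ) * z) - (b : ℂ) / z)) (Metric.sphere 1 r) := by
    refine ContinuousOn.mul (ContinuousOn.mul (by fun_prop) ?_) ?_
    · exact ContinuousOn.zpow₀ (by fun_prop) _
        (fun z hz => Or.inl (mul_ne_zero (hne z hz) (hne1 z hz)))
    · refine ContinuousOn.cexp (ContinuousOn.sub (by fun_prop) ?_)
      exact continuousOn_const.div continuousOn_id hne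
  have h1 := hc.integral 1 r (1 - r) (1 + r) hr0.le (by linarith) (by linarith) (fun z hz => by
    rw [mem_sphere_iff_norm] at hz
    have t1 := norm_sub_norm_le (1 : ℂ) z
    have t2 := norm_sub_norm_le z (1 : ℂ)
    rw [norm_sub_rev, hz] at t1
    rw [hz] at t2
    rw [norm_one] at t1 t2
    constructor <;> linarith) _ hcont
  have h2 : (∮ z in C(1, r), (2 * z - 1) * (z * (z - 1)) ^ (-((j : ℤ) + 1)) *
      Complex.exp (-((a : ℂ) * z) - (b : ℂ) / z) *
      ((z * (z - 1)) ^ k * Complex.exp (a * z + b / z)))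
      = if j = k then 2 * (Real.pi : ℂ) * Complex.I else 0 := by
    have e := final_integral r hr0 hr1 ((k : ℤ) - j - 1)
    have e3 : ((k : ℤ) - j - 1 = -1) ↔ j = k := by omega
    simp only [e3] at e
    rw [← e]
    refine circleIntegral.integral_congr hr0.le fun z hz => ?_
    have hu := mul_ne_zero (hne z hz) (hne1 z hz)
    have e1 : (z * (z - 1)) ^ ((k : ℤ) - j - 1)
        = (z * (z - 1)) ^ (-((j : ℤ) + 1)) * (z * (z - 1)) ^ k := by
      rw [← zpow_natCast, ← zpow_add₀ hu]; congr 1; ring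
    have e2 : Complex.exp (-((a : ℂ) * z) - (b : ℂ) / z) * Complex.exp (a * z + b / z) = 1 := by
      rw [← Complex.exp_add, ← Complex.exp_zero]; congr 1; ring
    simp only [e1]
    linear_combination (2 * z - 1) * (z * (z - 1)) ^ (-((j : ℤ) + 1)) * (z * (z - 1)) ^ k * e2
  rw [h2] at h1
  have h3 := ((Equiv.addRight (2 * (n : ℤ))).hasSum_iff.2 h1).mul_left
    (2 * (Real.pi : ℂ) * Complex.I)⁻¹
  have h4 : HasSum (fun x : ℤ => Phi n a b r j x * Psi n a b ρ k x)
      (if j = k then 1 else 0) := by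
    have hv : (2 * (Real.pi : ℂ) * Complex.I)⁻¹ *
        (if j = k then 2 * (Real.pi : ℂ) * Complex.I else 0) = if j = k then 1 else 0 := by
      split_ifs
      · exact inv_mul_cancel₀ Complex.two_pi_I_ne_zero
      · simp
    rw [hv] at h3
    · refine (hsum_congr fun x => ?_).1 h3
      rw [Psi_eq n a b ρ hρ k x c hc]
      simp only [Phi, Function.comp, Equiv.coe_addRight]
      have e : ∀ z : ℂ, (2 * z - 1) * z ^ (x + 2 * (n : ℤ)) * (z * (z - 1)) ^ (-((j : ℤ) + 1)) *
          Complex.exp (-((a : ℂ) * z) - (b : ℂ) / z) =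
          (2 * z - 1) * (z * (z - 1)) ^ (-((j : ℤ) + 1)) *
          Complex.exp (-((a : ℂ) * z) - (b : ℂ) / z) * z ^ (x + 2 * (n : ℤ)) := fun z => by ring
      simp only [e]
      ring
  exact ⟨h4.summable.norm, h4.tsum_eq⟩
end

section
/- Fix u₁ < u₂. There exist constants C > 0 and T₀ > 0 such that for every T ≥ T₀ and all s₁, s₂ ∈ ℝ, | 2^{x₂−x₁} e^{(t₂−t₁)(2L+R/2)} · (T^{1/3}/(2πi)) ∮_{|w|=r} w^{−(x₁−x₂+1)} (w/(1−w))^{n₂−n₁} e^{(Rw+L/w)(t₁−t₂)} dw | ≤ C e^{−|s₁−s₂|}, where n_i = n(u_i), t_i = t(u_i), x_i = x(u_i, s_i), and the integral is over a positively oriented circle of any radius r ∈ (0,1) centered at 0 (the value is independent of such r). -/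
open Complex MeasureTheory
open scoped Real

/-- `t(u) = (p₀+θ)T − (p₁+1)uT^{2/3} + ½p₂u²T^{1/3}`. -/
noncomputable def tscale (θ p₀ p₁ p₂ T u : ℝ) : ℝ :=
  (p₀ + θ) * T - (p₁ + 1) * u * T ^ ((2 : ℝ)/3) + (1/2) * p₂ * u^2 * T ^ ((1 : ℝ)/3)

/-- `n(u) = ⌊(p₀−θ)T + (1−p₁)uT^{2/3} + ½p₂u²T^{1/3}⌋`. -/
noncomputable def nscale (θ p₀ p₁ p₂ T u : ℝ) : ℤ :=
  ⌊(p₀ - θ) * T + (1 - p₁) * u * T ^ ((2 : ℝ)/3) + (1/2) * p₂ * u^2 * T ^ ((1 : ℝ)/3)⌋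

/-- `x(u,s) = ⌊−2n(u) + v̄·t(u) − sT^{1/3}⌋` with `v̄ = R/2 − 2L`. -/
noncomputable def xscale (R L θ p₀ p₁ p₂ T u s : ℝ) : ℤ :=
  ⌊(-2 : ℝ) * (nscale θ p₀ p₁ p₂ T u : ℝ)
    + (R/2 - 2*L) * tscale θ p₀ p₁ p₂ T u - s * T ^ ((1 : ℝ)/3)⌋


lemma aux_radius_le (X N : ℤ) (R L τ : ℂ) {r ρ : ℝ} (hr : 0 < r) (hle : r ≤ ρ) (hρ : ρ < 1) :
    (∮ w in C(0, ρ), w ^ (-(X+1)) * (w / (1 - w)) ^ N * Complex.exp ((R * w + L / w) * τ)) =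
    ∮ w in C(0, r), w ^ (-(X+1)) * (w / (1 - w)) ^ N * Complex.exp ((R * w + L / w) * τ) := by
  have key : ∀ z : ℂ, z ≠ 0 → ‖z‖ < 1 → DifferentiableAt ℂ
      (fun w : ℂ => w ^ (-(X+1)) * (w / (1 - w)) ^ N * Complex.exp ((R * w + L / w) * τ)) z := by
    intro z hz hz1
    have h1 : 1 - z ≠ 0 := by
      intro h
      have : z = 1 := by linear_combination -h
      rw [this] at hz1
      simp at hz1
    have e1 : DifferentiableAt ℂ (fun w : ℂ => w ^ (-(X+1))) z :=
      differentiableAt_zpow.2 (Or.inl hz)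
    have e0 : DifferentiableAt ℂ (fun w : ℂ => w / (1 - w)) z :=
      differentiableAt_id.div ((differentiableAt_const _).sub differentiableAt_id) h1
    have e2 : DifferentiableAt ℂ (fun w : ℂ => (w / (1 - w)) ^ N) z :=
      e0.zpow (Or.inl (div_ne_zero hz h1))
    have e3 : DifferentiableAt ℂ (fun w : ℂ => Complex.exp ((R * w + L / w) * τ)) z := by
      have : DifferentiableAt ℂ (fun w : ℂ => L / w) z :=
        (differentiableAt_const _).div differentiableAt_id hz
      exact ((((differentiableAt_const R).mul differentiableAt_id).add this).mul_const τ).cexp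
    exact (e1.mul e2).mul e3
  apply Complex.circleIntegral_eq_of_differentiable_on_annulus_off_countable hr hle
    (Set.countable_empty)
  · intro z hz
    simp only [Set.mem_sdiff, Metric.mem_closedBall, dist_zero_right, Metric.mem_ball, not_lt] at hz
    refine (key z ?_ (by linarith)).continuousAt.continuousWithinAt
    rintro rfl
    simp at hz; linarith
  · intro z hz
    simp only [Set.mem_sdiff, Metric.mem_closedBall, dist_zero_right, Metric.mem_ball, not_le] at hz
    refine (key z ?_ (by linarith [hz.1.1]))
    rintro rfl
    simp at hz; linarith

lemma aux_radius (X N : ℤ) (R L τ : ℂ) {r ρ : ℝ} (hr : 0 < r) (hr1 : r < 1) (h0 : 0 < ρ)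
    (hρ : ρ < 1) :
    (∮ w in C(0, r), w ^ (-(X+1)) * (w / (1 - w)) ^ N * Complex.exp ((R * w + L / w) * τ)) =
    ∮ w in C(0, ρ), w ^ (-(X+1)) * (w / (1 - w)) ^ N * Complex.exp ((R * w + L / w) * τ) := by
  rcases le_total r ρ with h | h
  · exact (aux_radius_le X N R L τ hr h hρ).symm
  · exact aux_radius_le X N R L τ h0 h hr1

lemma aux_int {A : ℝ} (hA : 0 < A) :
    ∫ φ in (0:ℝ)..(2*π), Real.exp (-(A * (1 - Real.cos φ))) ≤ 2 * √(π / (A * (2 / π^2))) := by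
  have hπ := Real.pi_pos
  set B := A * (2 / π^2) with hB
  have hBpos : 0 < B := by positivity
  have hi : Integrable (fun x : ℝ => Real.exp (-B * x^2)) := integrable_exp_neg_mul_sq hBpos
  have hi2 : Integrable (fun x : ℝ => Real.exp (-B * (2*π - x)^2)) :=
    hi.comp_sub_left (2*π)
  have hpt : ∀ φ ∈ Set.Icc (0:ℝ) (2*π), Real.exp (-(A * (1 - Real.cos φ))) ≤
      Real.exp (-B * φ^2) + Real.exp (-B * (2*π - φ)^2) := by
    intro φ hφ
    rcases le_total φ π with h | h
    · have := Real.cos_le_one_sub_mul_cos_sq (x := φ) (by rw [abs_of_nonneg hφ.1]; exact h)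
      have h2 : Real.exp (-(A * (1 - Real.cos φ))) ≤ Real.exp (-B * φ^2) := by
        apply Real.exp_le_exp.2
        have : A * (2/π^2 * φ^2) ≤ A * (1 - Real.cos φ) := by
          apply mul_le_mul_of_nonneg_left _ hA.le; linarith
        rw [hB]; linarith
      linarith [Real.exp_pos (-B * (2*π - φ)^2)]
    · have := Real.cos_le_one_sub_mul_cos_sq (x := 2*π - φ)
        (by rw [abs_of_nonneg (by linarith [hφ.2])]; linarith)
      rw [Real.cos_two_pi_sub] at this
      have h2 : Real.exp (-(A * (1 - Real.cos φ))) ≤ Real.exp (-B * (2*π - φ)^2) := by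
        apply Real.exp_le_exp.2
        have : A * (2/π^2 * (2*π - φ)^2) ≤ A * (1 - Real.cos φ) := by
          apply mul_le_mul_of_nonneg_left _ hA.le; linarith
        rw [hB]; linarith
      linarith [Real.exp_pos (-B * φ^2)]
  calc _ ≤ ∫ φ in (0:ℝ)..(2*π), (Real.exp (-B * φ^2) + Real.exp (-B * (2*π - φ)^2)) := by
        apply intervalIntegral.integral_mono_on (by positivity) _ _ hpt
        · exact (Continuous.intervalIntegrable (by fun_prop) _ _)
        · exact (Continuous.intervalIntegrable (by fun_prop) _ _)
    _ ≤ ∫ φ : ℝ, (Real.exp (-B * φ^2) + Real.exp (-B * (2*π - φ)^2)) := by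
        rw [intervalIntegral.integral_of_le (by positivity)]
        apply setIntegral_le_integral (hi.add hi2)
        exact Filter.Eventually.of_forall (fun x => add_nonneg (Real.exp_pos _).le (Real.exp_pos _).le)
    _ = _ := by
        rw [integral_add hi hi2,
          integral_sub_left_eq_self (fun x : ℝ => Real.exp (-B * x^2)) volume (2*π),
          integral_gaussian]
        ring

lemma aux_log {q : ℝ} (hq : |q| ≤ 1/4) : |q + Real.log (2 - Real.exp q)| ≤ 8 * q^2 := by
  have h1 := Real.abs_exp_sub_one_le (x := q) (by linarith)
  have h2 : |Real.exp q - 1| ≤ 1/2 := by linarith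
  have h3 : 0 < 2 - Real.exp q := by have := (abs_le.1 h2).2; linarith
  have hy : (Real.exp q - 1)^2 ≤ 4 * q^2 := by
    rw [← sq_abs (Real.exp q - 1), ← sq_abs q]
    nlinarith [abs_nonneg (Real.exp q - 1), abs_nonneg q]
  have hy2 : (Real.exp q - 1)^2 ≤ 1/4 := by
    rw [← sq_abs (Real.exp q - 1)]
    nlinarith [abs_nonneg (Real.exp q - 1)]
  have e : q + Real.log (2 - Real.exp q) = Real.log (1 - (Real.exp q - 1)^2) := by
    conv_lhs => rw [← Real.log_exp q, Real.exp_log (Real.exp_pos q), ← Real.log_mul (Real.exp_pos q).ne' h3.ne']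
    congr 1; ring
  rw [e]
  set y := (Real.exp q - 1)^2
  have hy0 : 0 ≤ y := sq_nonneg _
  have hlow := Real.one_sub_inv_le_log_of_pos (x := 1 - y) (by linarith)
  have hup := Real.log_le_sub_one_of_pos (x := 1 - y) (by linarith)
  have : (1-y)⁻¹ ≤ 1 + 2*y := by
    rw [inv_le_iff_one_le_mul₀ (by linarith)]; nlinarith
  rw [abs_le]; constructor <;> nlinarith

lemma aux_g {β c : ℝ} (h1 : 1/2 ≤ β) (h2 : β ≤ 24) (hc : 0 ≤ c) (hc2 : c ≤ 2) :
    c / 120 ≤ Real.log (1 + β * c) ∧ Real.log (1 + β * c) ≤ 24 * c := by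
  have hb : 0 ≤ β * c := by positivity
  have hlow := Real.one_sub_inv_le_log_of_pos (x := 1 + β*c) (by linarith)
  have hup := Real.log_le_sub_one_of_pos (x := 1 + β*c) (by linarith)
  constructor
  · refine le_trans ?_ hlow
    have : (1 + β*c)⁻¹ ≤ 1 - c/120 := by
      rw [inv_le_iff_one_le_mul₀ (by linarith)]
      have h3 : c/2 ≤ β*c := by nlinarith
      have h4 : β*c ≤ 48 := by nlinarith
      nlinarith
    linarith
  · nlinarith

lemma aux_exp_int (x : ℝ) (n : ℤ) : Real.exp (n * x) = Real.exp x ^ n := by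
  rw [mul_comm, Real.exp_mul, Real.rpow_intCast]

lemma aux_norm (X N : ℤ) (R L τ q φ : ℝ) (hq : |q| ≤ 1/4) :
    (2:ℝ) ^ (-X) * Real.exp (-τ * (2*L + R/2)) *
    ‖deriv (circleMap 0 (Real.exp q / 2)) φ •
      ((circleMap 0 (Real.exp q / 2) φ) ^ (-(X+1)) *
        ((circleMap 0 (Real.exp q / 2) φ) / (1 - (circleMap 0 (Real.exp q / 2) φ))) ^ N *
        Complex.exp (((R:ℂ) * (circleMap 0 (Real.exp q / 2) φ)
          + (L:ℂ) / (circleMap 0 (Real.exp q / 2) φ)) * (τ : ℂ)))‖ =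
    Real.exp (-q * X + N * (q - Real.log (2 - Real.exp q) - 1/2 *
      Real.log (1 + 4 * Real.exp q / (2 - Real.exp q)^2 * (1 - Real.cos φ)))
      + τ * ((R * (Real.exp q / 2) + L / (Real.exp q / 2)) * Real.cos φ - (2 * L + R/2))) := by
  have h1 := Real.abs_exp_sub_one_le (x := q) (by linarith)
  have h2 : |Real.exp q - 1| ≤ 1/2 := by linarith
  have h3 : 0 < 2 - Real.exp q := by have := (abs_le.1 h2).2; linarith
  have hE := Real.exp_pos q
  set ρ := Real.exp q / 2 with hρ
  have hρ0 : 0 < ρ := by positivity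
  set w := circleMap 0 ρ φ with hw
  have hwn : ‖w‖ = ρ := by rw [hw, norm_circleMap_zero, abs_of_pos hρ0]
  have hwc : w = ((ρ * Real.cos φ : ℝ) : ℂ) + ((ρ * Real.sin φ : ℝ) : ℂ) * I := by
    rw [hw, circleMap, zero_add, Complex.exp_mul_I]; push_cast; ring
  have hre : w.re = ρ * Real.cos φ := by rw [hwc]; simp only [Complex.add_re, Complex.mul_re, Complex.ofReal_re, Complex.ofReal_im, Complex.I_re, Complex.I_im]; ring
  have him : w.im = ρ * Real.sin φ := by rw [hwc]; simp only [Complex.add_im, Complex.mul_im, Complex.ofReal_re, Complex.ofReal_im, Complex.I_re, Complex.I_im]; ring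
  have hc0 : 0 ≤ 1 - Real.cos φ := by linarith [Real.cos_le_one φ]
  set β := 4 * Real.exp q / (2 - Real.exp q)^2 with hβ
  have hβ0 : 0 < β := by positivity
  have h1w : ‖1 - w‖^2 = ((2 - Real.exp q)/2)^2 * (1 + β * (1 - Real.cos φ)) := by
    rw [← Complex.normSq_eq_norm_sq, Complex.normSq_apply]
    simp only [Complex.sub_re, Complex.sub_im, Complex.one_re, Complex.one_im, hre, him]
    have e1 : ((2 - Real.exp q)/2)^2 * (1 + β * (1 - Real.cos φ)) =
        ((2 - Real.exp q)/2)^2 + Real.exp q * (1 - Real.cos φ) := by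
      rw [hβ]; field_simp; ring
    rw [e1, hρ]
    linear_combination (Real.exp q / 2)^2 * Real.sin_sq_add_cos_sq φ
  have h1wpos : 0 < ‖1 - w‖ := by
    have : 0 < ‖1 - w‖^2 := by rw [h1w]; positivity
    exact (norm_nonneg _).lt_of_ne' (fun h => by rw [h] at this; norm_num at this)
  have hlog1w : Real.log ‖1 - w‖ = Real.log (2 - Real.exp q) - Real.log 2 + 1/2 *
      Real.log (1 + β * (1 - Real.cos φ)) := by
    have := congrArg Real.log h1w
    rw [Real.log_pow, Real.log_mul (by positivity) (by positivity), Real.log_pow,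
      Real.log_div h3.ne' (by norm_num)] at this
    push_cast at this
    linarith
  have hratio : ρ / ‖1 - w‖ = Real.exp (q - Real.log (2 - Real.exp q) - 1/2 *
      Real.log (1 + β * (1 - Real.cos φ))) := by
    rw [← Real.exp_log (div_pos hρ0 h1wpos), Real.log_div hρ0.ne' h1wpos.ne', hlog1w, hρ,
      Real.log_div hE.ne' (by norm_num), Real.log_exp]
    congr 1; ring
  have hexp : ‖Complex.exp (((R:ℂ) * w + (L:ℂ) / w) * (τ : ℂ))‖ =
      Real.exp (τ * ((R * ρ + L / ρ) * Real.cos φ)) := by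
    rw [Complex.norm_exp]
    congr 1
    have hn : Complex.normSq w = ρ^2 := by rw [Complex.normSq_eq_norm_sq, hwn]
    rw [Complex.re_mul_ofReal, Complex.add_re, Complex.re_ofReal_mul, Complex.div_re, hn, hre]
    simp only [Complex.ofReal_re, Complex.ofReal_im]
    field_simp
    ring
  have hd : ‖deriv (circleMap 0 ρ) φ‖ = ρ := by
    rw [deriv_circleMap, ← hw, norm_mul, hwn, Complex.norm_I, mul_one]
  rw [norm_smul, norm_mul, norm_mul, norm_zpow, norm_zpow, norm_div, hd, hwn, hexp, hratio]
  have hpow : (2:ℝ)^(-X) * (ρ * ρ ^ (-(X+1))) = Real.exp (-q * X) := by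
    have : ρ * ρ ^ (-(X+1)) = ρ ^ (-X) := by
      rw [← zpow_one_add₀ hρ0.ne']; congr 1; ring
    rw [this, ← mul_zpow, hρ, show 2 * (Real.exp q / 2) = Real.exp q by ring, ← aux_exp_int]
    congr 1; push_cast; ring
  rw [← aux_exp_int]
  calc _ = ((2:ℝ)^(-X) * (ρ * ρ ^ (-(X+1)))) * Real.exp (-τ * (2*L + R/2)) *
        Real.exp (N * (q - Real.log (2 - Real.exp q) - 1/2 *
          Real.log (1 + β * (1 - Real.cos φ)))) *
        Real.exp (τ * ((R * ρ + L / ρ) * Real.cos φ)) := by ring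
    _ = _ := by
      rw [hpow, ← Real.exp_add, ← Real.exp_add, ← Real.exp_add]
      congr 1; ring

set_option maxHeartbeats 2000000 in
lemma aux_exponent (R L a a' b : ℝ) (hR : 0 ≤ R) (hL : 0 ≤ L) (ha : 0 ≤ a) (ha' : 0 ≤ a')
    (hb : 0 ≤ b) (K : ℝ) (hK : K = a/240 + a' * (R/4 + L)) (m : ℝ) (hm : 4 ≤ m)
    (hmb : b * (12 + R + 4 * L) ≤ K / 2 * m)
    (X N τ S q c : ℝ) (hN : |N - a * m^2| ≤ b * m) (hτ : |τ - a' * m^2| ≤ b * m)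
    (hX : |X - (2 * N + (R/2 - 2*L) * τ - S * m)| ≤ 2)
    (hq : |q| ≤ 1/m) (hqS : q * S * m = -|S|) (hc : 0 ≤ c) (hc2 : c ≤ 2) :
    -q * X + N * (q - Real.log (2 - Real.exp q) - 1/2 *
      Real.log (1 + 4 * Real.exp q / (2 - Real.exp q)^2 * c))
      + τ * ((R * (Real.exp q / 2) + L / (Real.exp q / 2)) * (1 - c) - (2 * L + R/2))
    ≤ (1 + 8 * (a + b) + (a' + b) * (R/2 + 2*L)) - |S| - K/2 * m^2 * c := by
  have hm0 : 0 < m := by linarith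
  have hq4 : |q| ≤ 1/4 := hq.trans (one_div_le_one_div_of_le (by norm_num) hm)
  have hqm : q^2 * m^2 ≤ 1 := by
    have : |q| * m ≤ 1 := by rw [le_div_iff₀ hm0] at hq; exact hq
    have h := mul_le_mul this this (by positivity) (by norm_num)
    rw [← sq_abs q]; nlinarith
  have h1 := Real.abs_exp_sub_one_le (x := q) (by linarith)
  have h2 := abs_le.1 (show |Real.exp q - 1| ≤ 1/2 by linarith)
  have h3 : 0 < 2 - Real.exp q := by linarith [h2.2]
  have hE := Real.exp_pos q
  have hElo : 1/2 ≤ Real.exp q := by linarith [h2.1]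
  have hEhi : Real.exp q ≤ 3/2 := by linarith [h2.2]
  have hinv : (Real.exp q / 2)⁻¹ = 2 * Real.exp (-q) := by
    rw [Real.exp_neg]; field_simp
  have hβ1 : 1/2 ≤ 4 * Real.exp q / (2 - Real.exp q)^2 := by
    rw [le_div_iff₀ (by positivity)]; nlinarith
  have hβ2 : 4 * Real.exp q / (2 - Real.exp q)^2 ≤ 24 := by
    rw [div_le_iff₀ (by positivity)]; nlinarith
  obtain ⟨hg1, hg2⟩ := aux_g hβ1 hβ2 hc hc2
  set g := Real.log (1 + 4 * Real.exp q / (2 - Real.exp q)^2 * c)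
  have hM1 : R/4 + L ≤ R * (Real.exp q / 2) + L / (Real.exp q / 2) := by
    have : 1 ≤ (Real.exp q / 2)⁻¹ := (one_le_inv₀ (by positivity)).2 (by linarith)
    rw [div_eq_mul_inv L]; nlinarith
  have hM2 : R * (Real.exp q / 2) + L / (Real.exp q / 2) ≤ R + 4 * L := by
    have : (Real.exp q / 2)⁻¹ ≤ 4 := by rw [inv_le_comm₀ (by positivity) (by norm_num)]; linarith
    rw [div_eq_mul_inv L]; nlinarith
  have hlog := aux_log hq4
  set ℓ := Real.log (2 - Real.exp q)
  have hx1 := Real.abs_exp_sub_one_sub_id_le (x := q) (by linarith)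
  have hx2 := Real.abs_exp_sub_one_sub_id_le (x := -q) (by rw [abs_neg]; linarith)
  set M := R * (Real.exp q / 2) + L / (Real.exp q / 2) with hM
  have hD : |M - (2*L + R/2) - (R/2 - 2*L) * q| ≤ (R/2 + 2*L) * q^2 := by
    have : M - (2*L + R/2) - (R/2 - 2*L) * q =
        R/2 * (Real.exp q - 1 - q) + 2*L * (Real.exp (-q) - 1 - -q) := by
      rw [hM, div_eq_mul_inv L, hinv]; ring
    rw [this]
    refine (abs_add_le _ _).trans ?_
    rw [abs_mul, abs_mul, abs_of_nonneg (by positivity : (0:ℝ) ≤ R/2),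
      abs_of_nonneg (by positivity : (0:ℝ) ≤ 2*L)]
    have e1 := mul_le_mul_of_nonneg_left hx1 (by positivity : (0:ℝ) ≤ R/2)
    have e2 := mul_le_mul_of_nonneg_left hx2 (by positivity : (0:ℝ) ≤ 2*L)
    rw [neg_sq] at e2
    linarith
  have hbm : b * m ≤ b * m^2 := mul_le_mul_of_nonneg_left (by nlinarith) hb
  have hNabs : |N| ≤ (a + b) * m^2 := by
    have h4 := abs_le.1 hN
    have h5 := mul_nonneg ha (sq_nonneg m)
    rw [abs_le]; constructor <;> linarith [h4.1, h4.2]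
  have hτabs : |τ| ≤ (a' + b) * m^2 := by
    have h4 := abs_le.1 hτ
    have h5 := mul_nonneg ha' (sq_nonneg m)
    rw [abs_le]; constructor <;> linarith [h4.1, h4.2]
  -- pieces
  have t1 : -q * (X - (2 * N + (R/2 - 2*L) * τ - S * m)) ≤ 1 := by
    refine (le_abs_self _).trans ?_
    rw [abs_mul, abs_neg]
    calc |q| * |X - (2 * N + (R/2 - 2*L) * τ - S * m)| ≤ 1/4 * 2 :=
          mul_le_mul hq4 hX (abs_nonneg _) (by norm_num)
      _ ≤ 1 := by norm_num
  have t2 : -(N * (q + ℓ)) ≤ 8 * (a + b) := by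
    refine (neg_le_abs _).trans ?_
    rw [abs_mul]
    calc |N| * |q + ℓ| ≤ ((a+b)*m^2) * (8 * q^2) :=
          mul_le_mul hNabs hlog (abs_nonneg _) (by positivity)
      _ = 8 * (a+b) * (q^2*m^2) := by ring
      _ ≤ 8 * (a+b) * 1 := mul_le_mul_of_nonneg_left hqm (by positivity)
      _ = _ := by ring
  have t3 : τ * (M - (2*L + R/2) - (R/2 - 2*L) * q) ≤ (a' + b) * (R/2 + 2*L) := by
    refine (le_abs_self _).trans ?_
    rw [abs_mul]
    calc |τ| * |M - (2*L + R/2) - (R/2 - 2*L) * q| ≤ ((a'+b)*m^2) * ((R/2 + 2*L) * q^2) :=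
          mul_le_mul hτabs hD (abs_nonneg _) (by positivity)
      _ = (a'+b) * (R/2 + 2*L) * (q^2*m^2) := by ring
      _ ≤ (a'+b) * (R/2 + 2*L) * 1 := mul_le_mul_of_nonneg_left hqm (by positivity)
      _ = _ := by ring
  have hg0 : 0 ≤ g := le_trans (by positivity) hg1
  have hM0 : 0 ≤ M := le_trans (by positivity) hM1
  have t4 : a * m^2 * (c/240) - b * m * (12 * c) ≤ N / 2 * g := by
    have e1 : (a * m^2 - b * m) * (g/2) ≤ N * (g/2) :=
      mul_le_mul_of_nonneg_right (by linarith [(abs_le.1 hN).1]) (by positivity)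
    have e2 : a * m^2 * (c/240) ≤ a * m^2 * (g/2) :=
      mul_le_mul_of_nonneg_left (by linarith) (by positivity)
    have e3 : b * m * (g/2) ≤ b * m * (12*c) :=
      mul_le_mul_of_nonneg_left (by linarith) (by positivity)
    linarith
  have t5 : a' * m^2 * ((R/4+L)*c) - b * m * ((R+4*L) * c) ≤ τ * (M * c) := by
    have e1 : (a' * m^2 - b * m) * (M * c) ≤ τ * (M * c) :=
      mul_le_mul_of_nonneg_right (by linarith [(abs_le.1 hτ).1]) (by positivity)
    have e2 : a' * m^2 * ((R/4+L)*c) ≤ a' * m^2 * (M*c) :=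
      mul_le_mul_of_nonneg_left (mul_le_mul_of_nonneg_right hM1 hc) (by positivity)
    have e3 : b * m * (M*c) ≤ b * m * ((R+4*L)*c) :=
      mul_le_mul_of_nonneg_left (mul_le_mul_of_nonneg_right hM2 hc) (by positivity)
    linarith
  have t6 : K/2 * m^2 * c ≤ N/2 * g + τ * (M * c) := by
    have : (b * (12 + R + 4 * L)) * (m * c) ≤ K / 2 * m * (m * c) :=
      mul_le_mul_of_nonneg_right hmb (by positivity)
    have hKm : K * m^2 * c = a * m^2 * (c/240) + a' * m^2 * ((R/4+L)*c) := by rw [hK]; ring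
    linarith
  linarith

lemma aux_core (R L a a' b : ℝ) (hR : 0 ≤ R) (hL : 0 ≤ L) (ha : 0 ≤ a) (ha' : 0 ≤ a')
    (hb : 0 ≤ b) (K : ℝ) (hK : K = a/240 + a' * (R/4 + L)) (hK0 : 0 < K) (m : ℝ) (hm : 4 ≤ m)
    (hmb : b * (12 + R + 4 * L) ≤ K / 2 * m)
    (X N : ℤ) (τ S : ℝ) (hN : |(N:ℝ) - a * m^2| ≤ b * m) (hτ : |τ - a' * m^2| ≤ b * m)
    (hX : |(X:ℝ) - (2 * N + (R/2 - 2*L) * τ - S * m)| ≤ 2) (r : ℝ) (hr : 0 < r) (hr1 : r < 1) :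
    ‖(2:ℂ) ^ (-X) * Complex.exp ((-τ * (2*L + R/2) : ℝ) : ℂ) * (m : ℂ) *
      (2 * (Real.pi : ℂ) * Complex.I)⁻¹ *
      ∮ w in C(0, r), w ^ (-(X+1)) * (w / (1 - w)) ^ N *
        Complex.exp (((R:ℂ) * w + (L:ℂ) / w) * (τ:ℂ))‖ ≤
    (Real.exp (1 + 8 * (a + b) + (a' + b) * (R/2 + 2*L)) * (2 * √(π / (K/2 * (2 / π^2)))))
      * Real.exp (-|S|) := by
  have hm0 : 0 < m := by linarith
  obtain ⟨q, hq, hqS⟩ : ∃ q : ℝ, |q| ≤ 1/m ∧ q * S * m = -|S| := by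
    rcases le_total 0 S with h | h
    · refine ⟨-(1/m), by rw [abs_neg, abs_of_pos (by positivity)], ?_⟩
      rw [abs_of_nonneg h]; field_simp
    · refine ⟨1/m, by rw [abs_of_pos (by positivity)], ?_⟩
      rw [abs_of_nonpos h]; field_simp
  have hq4 : |q| ≤ 1/4 := hq.trans (one_div_le_one_div_of_le (by norm_num) hm)
  have h1 := Real.abs_exp_sub_one_le (x := q) (by linarith)
  have h2 := abs_le.1 (show |Real.exp q - 1| ≤ 1/2 by linarith)
  have hE := Real.exp_pos q
  rw [aux_radius X N R L τ hr hr1 (show 0 < Real.exp q / 2 by positivity) (by linarith [h2.2])]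
  set C0 := 1 + 8 * (a + b) + (a' + b) * (R/2 + 2*L)
  set A := K/2 * m^2 with hA
  have hA0 : 0 < A := by positivity
  set P := (2:ℝ) ^ (-X) * Real.exp (-τ * (2*L + R/2)) with hP
  have hP0 : 0 < P := by positivity
  have hint : P * ‖∮ w in C(0, Real.exp q / 2), w ^ (-(X+1)) * (w / (1 - w)) ^ N *
        Complex.exp (((R:ℂ) * w + (L:ℂ) / w) * (τ:ℂ))‖ ≤
      Real.exp (C0 - |S|) * (2 * √(π / (A * (2 / π^2)))) := by
    have hb : ‖∮ w in C(0, Real.exp q / 2), w ^ (-(X+1)) * (w / (1 - w)) ^ N *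
        Complex.exp (((R:ℂ) * w + (L:ℂ) / w) * (τ:ℂ))‖ ≤
        ∫ φ in (0:ℝ)..(2*π), P⁻¹ * (Real.exp (C0 - |S|) * Real.exp (-(A * (1 - Real.cos φ)))) := by
      rw [circleIntegral]
      apply intervalIntegral.norm_integral_le_of_norm_le (by positivity)
      · refine Filter.Eventually.of_forall (fun φ _ => ?_)
        rw [le_inv_mul_iff₀ hP0, hP, aux_norm X N R L τ q φ hq4, ← Real.exp_add]
        apply Real.exp_le_exp.2
        have := aux_exponent R L a a' b hR hL ha ha' hb K hK m hm hmb X N τ S q (1 - Real.cos φ)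
          hN hτ hX hq hqS (by linarith [Real.cos_le_one φ]) (by linarith [Real.neg_one_le_cos φ])
        rw [sub_sub_cancel] at this
        refine this.trans (le_of_eq ?_)
        rw [hA]; ring
      · exact Continuous.intervalIntegrable (by fun_prop) _ _
    rw [intervalIntegral.integral_const_mul, intervalIntegral.integral_const_mul] at hb
    rw [← le_inv_mul_iff₀ hP0]
    refine hb.trans ?_
    have := aux_int hA0
    gcongr
  have hsq : √(π / (A * (2 / π^2))) = √(π / (K/2 * (2 / π^2))) / m := by
    rw [hA, show π / (K/2 * m^2 * (2 / π^2)) = π / (K/2 * (2 / π^2)) / m^2 by field_simp,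
      Real.sqrt_div (by positivity), Real.sqrt_sq hm0.le]
  rw [hsq] at hint
  have h2pi : ‖(2 * (Real.pi : ℂ) * Complex.I)⁻¹‖ ≤ 1 := by
    rw [norm_inv, norm_mul, norm_mul, Complex.norm_I, Complex.norm_real, Complex.norm_ofNat,
      Real.norm_of_nonneg Real.pi_pos.le]
    exact inv_le_one_of_one_le₀ (by linarith [Real.pi_gt_three])
  have hp : ‖(2:ℂ) ^ (-X) * Complex.exp ((-τ * (2*L + R/2) : ℝ) : ℂ)‖ = P := by
    rw [norm_mul, norm_zpow, Complex.norm_ofNat, Complex.norm_exp, Complex.ofReal_re]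
  rw [norm_mul, norm_mul, norm_mul, hp, Complex.norm_real, Real.norm_of_nonneg hm0.le]
  set J := ‖∮ w in C(0, Real.exp q / 2), w ^ (-(X+1)) * (w / (1 - w)) ^ N *
        Complex.exp (((R:ℂ) * w + (L:ℂ) / w) * (τ:ℂ))‖
  have hJ : 0 ≤ J := norm_nonneg _
  calc P * m * ‖(2 * (Real.pi : ℂ) * Complex.I)⁻¹‖ * J ≤ P * m * 1 * J := by gcongr
    _ = m * (P * J) := by ring
    _ ≤ m * (Real.exp (C0 - |S|) * (2 * (√(π / (K/2 * (2 / π^2))) / m))) := by gcongr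
    _ = _ := by
      rw [sub_eq_add_neg, Real.exp_add]; field_simp

/-- bound on the conjugated, rescaled diffusion term of the
flat-initial-condition PushASEP kernel: for fixed `u₁ < u₂` there are `C, T₀ > 0`
such that for all `T ≥ T₀` and all `s₁, s₂` the term is bounded by `C e^{−|s₁−s₂|}`. -/
theorem stmt17 (R L θ p₀ p₁ p₂ : ℝ) (hR : 0 ≤ R) (hL : 0 ≤ L)
    (hRL : 0 < 8*L + R) (hθ : 0 < θ) (hp₀ : θ ≤ p₀) (hp₁ : |p₁| ≤ 1)
    (hκ : 0 < (R + 4*L) * (p₁ + 1) + 4 * (1 - p₁))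
    (u₁ u₂ : ℝ) (hu : u₁ < u₂) :
    ∃ C > (0 : ℝ), ∃ T₀ > (0 : ℝ), ∀ T ≥ T₀, ∀ s₁ s₂ : ℝ,
      ∀ r : ℝ, 0 < r → r < 1 →
      ‖(2 : ℂ) ^ (xscale R L θ p₀ p₁ p₂ T u₂ s₂ - xscale R L θ p₀ p₁ p₂ T u₁ s₁) *
          Complex.exp ((((tscale θ p₀ p₁ p₂ T u₂ - tscale θ p₀ p₁ p₂ T u₁)
              * (2*L + R/2) : ℝ) : ℂ)) *
          ((T ^ ((1 : ℝ)/3) : ℝ) : ℂ) * (2 * (Real.pi : ℂ) * Complex.I)⁻¹ *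
          ∮ w in C(0, r),
            w ^ (-(xscale R L θ p₀ p₁ p₂ T u₁ s₁ - xscale R L θ p₀ p₁ p₂ T u₂ s₂ + 1)) *
              (w / (1 - w)) ^ (nscale θ p₀ p₁ p₂ T u₂ - nscale θ p₀ p₁ p₂ T u₁) *
              Complex.exp (((R : ℂ) * w + (L : ℂ) / w) *
                (((tscale θ p₀ p₁ p₂ T u₁ - tscale θ p₀ p₁ p₂ T u₂) : ℝ) : ℂ))‖
        ≤ C * Real.exp (-|s₁ - s₂|) := by
  have hp := abs_le.1 hp₁
  set D := u₂ - u₁ with hD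
  have hD0 : 0 < D := by rw [hD]; linarith
  set a := (1 - p₁) * D with ha
  set a' := (p₁ + 1) * D with ha'
  have ha0 : 0 ≤ a := mul_nonneg (by linarith) hD0.le
  have ha0' : 0 ≤ a' := mul_nonneg (by linarith) hD0.le
  set e := (1/2) * p₂ * (u₂^2 - u₁^2) with he
  set b := |e| + 1 with hb
  have hb0 : 0 ≤ b := by positivity
  set K := a/240 + a' * (R/4 + L) with hK
  have hK0 : 0 < K := by
    have h1 : 0 < D * ((R + 4*L) * (p₁ + 1) + 4 * (1 - p₁)) := mul_pos hD0 hκ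
    have h2 : 0 ≤ a' * (R + 4*L) := by positivity
    have h3 : D * ((R + 4*L) * (p₁ + 1) + 4 * (1 - p₁)) = a' * (R + 4*L) + 4 * a := by
      rw [ha, ha']; ring
    rw [hK]; nlinarith
  set m₀ := max 4 (b * (12 + R + 4 * L) / (K/2)) with hm₀
  have hm₀4 : 4 ≤ m₀ := le_max_left _ _
  refine ⟨Real.exp (1 + 8 * (a + b) + (a' + b) * (R/2 + 2*L)) *
    (2 * √(π / (K/2 * (2 / π^2)))), by positivity, m₀^3, by positivity, ?_⟩
  intro T hT s₁ s₂ r hr hr1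
  have hT0 : 0 < T := lt_of_lt_of_le (by positivity) hT
  have hT23 : T ^ ((2:ℝ)/3) = (T ^ ((1:ℝ)/3))^2 := by
    rw [← Real.rpow_natCast, ← Real.rpow_mul hT0.le]; norm_num
  have hmm : m₀ ≤ T ^ ((1:ℝ)/3) := by
    have : (m₀^3) ^ ((1:ℝ)/3) ≤ T ^ ((1:ℝ)/3) := Real.rpow_le_rpow (by positivity) hT (by norm_num)
    rwa [← Real.rpow_natCast, ← Real.rpow_mul (by positivity),
      show (((3:ℕ):ℝ) * (1/3)) = 1 by norm_num, Real.rpow_one] at this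
  have hm4 : 4 ≤ T ^ ((1:ℝ)/3) := hm₀4.trans hmm
  have hmb : b * (12 + R + 4 * L) ≤ K/2 * T ^ ((1:ℝ)/3) := by
    have := (le_max_right 4 (b * (12 + R + 4 * L) / (K/2))).trans hmm
    rwa [div_le_iff₀' (by positivity)] at this
  set X := xscale R L θ p₀ p₁ p₂ T u₁ s₁ - xscale R L θ p₀ p₁ p₂ T u₂ s₂ with hX
  set N := nscale θ p₀ p₁ p₂ T u₂ - nscale θ p₀ p₁ p₂ T u₁ with hN
  set τ := tscale θ p₀ p₁ p₂ T u₁ - tscale θ p₀ p₁ p₂ T u₂ with hτ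
  have e1 : xscale R L θ p₀ p₁ p₂ T u₂ s₂ - xscale R L θ p₀ p₁ p₂ T u₁ s₁ = -X := by
    rw [hX]; ring
  have e2 : tscale θ p₀ p₁ p₂ T u₂ - tscale θ p₀ p₁ p₂ T u₁ = -τ := by
    rw [hτ]; ring
  rw [e1, e2]
  refine aux_core R L a a' b hR hL ha0 ha0' hb0 K hK hK0 (T ^ ((1:ℝ)/3)) hm4 hmb X N τ (s₁ - s₂)
    ?_ ?_ ?_ r hr hr1
  · rw [hN, nscale, nscale, hT23]
    set m := T ^ ((1:ℝ)/3)
    push_cast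
    set y₁ := (p₀ - θ) * T + (1 - p₁) * u₁ * m^2 + (1/2) * p₂ * u₁^2 * m with hy₁
    set y₂ := (p₀ - θ) * T + (1 - p₁) * u₂ * m^2 + (1/2) * p₂ * u₂^2 * m with hy₂
    have hy : y₂ - y₁ = a * m^2 + e * m := by rw [hy₁, hy₂, ha, he, hD]; ring
    have f1 := Int.floor_le y₁
    have f2 := Int.floor_le y₂
    have f3 := Int.lt_floor_add_one y₁
    have f4 := Int.lt_floor_add_one y₂
    have g1 : e * m ≤ |e| * m := mul_le_mul_of_nonneg_right (le_abs_self e) (by linarith)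
    have g2 : -e * m ≤ |e| * m := mul_le_mul_of_nonneg_right (neg_le_abs e) (by linarith)
    rw [hb, abs_le]; constructor <;> linarith
  · rw [hτ, tscale, tscale, hT23]
    set m := T ^ ((1:ℝ)/3)
    have g1 : e * m ≤ |e| * m := mul_le_mul_of_nonneg_right (le_abs_self e) (by linarith)
    have g2 : -e * m ≤ |e| * m := mul_le_mul_of_nonneg_right (neg_le_abs e) (by linarith)
    rw [hb, ha', abs_le, hD]; rw [he] at g1 g2 ⊢; constructor <;> linarith
  · rw [hX, xscale, xscale, hN, hτ]
    set m := T ^ ((1:ℝ)/3)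
    push_cast
    set n₁ := (nscale θ p₀ p₁ p₂ T u₁ : ℝ)
    set n₂ := (nscale θ p₀ p₁ p₂ T u₂ : ℝ)
    set t₁ := tscale θ p₀ p₁ p₂ T u₁
    set t₂ := tscale θ p₀ p₁ p₂ T u₂
    set y₁ := -2 * n₁ + (R/2 - 2*L) * t₁ - s₁ * m with hy₁
    set y₂ := -2 * n₂ + (R/2 - 2*L) * t₂ - s₂ * m with hy₂
    have hy : 2 * (n₂ - n₁) + (R/2 - 2*L) * (t₁ - t₂) - (s₁ - s₂) * m = y₁ - y₂ := by
      rw [hy₁, hy₂]; ring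
    rw [hy]
    have f1 := Int.floor_le y₁
    have f2 := Int.floor_le y₂
    have f3 := Int.lt_floor_add_one y₁
    have f4 := Int.lt_floor_add_one y₂
    rw [abs_le]; constructor <;> linarith
end

section
/- Fix u₁, u₂ and ℓ > 0. There exist constants C > 0 and T₀ > 0 such that for every T ≥ T₀ and all (s₁, s₂) ∈ [−ℓ, ∞)², | 2^{x₂−x₁} e^{(t₂−t₁)(2L+R/2)} · (T^{1/3}/(2πi)) ∮_{|z−1|=r} e^{R t₁ (1−z) + L t₁/(1−z) − R t₂ z − L t₂/z} z^{n₁+n₂+x₂} (1−z)^{−(n₁+n₂+x₁+1)} dz | ≤ C e^{−(s₁+s₂)}, where n_i = n(u_i), t_i = t(u_i), x_i = x(u_i, s_i), and the integral is over a positively oriented circle of any radius r ∈ (0,1) centered at 1 (enclosing z = 1 but not z = 0; the value is independent of such r). -/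
open Complex MeasureTheory
open scoped Real

lemma aux_decay (R L ρ q t τ₁ τ₂ μ B : ℝ) (hR : 0 ≤ R) (hL : 0 ≤ L) (h1 : 1/4 ≤ ρ) (h2 : ρ ≤ 1/2)
    (hq : 0 ≤ q) (hq2 : q ≤ 2) (ht : 0 ≤ t) (hτ₁ : |τ₁| ≤ B) (hτ₂ : |τ₂| ≤ B) (hμ : μ ≤ B) :
    q * (t * (1/2 - ρ) * ((R + 8*L)/4) - (R + 10*L + 2) * B) ≤
      q * (R * ρ * ((t+τ₁) + (t+τ₂)) + L * (t+τ₁) / ρ)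
      - L * (t+τ₂) * (1/(1-ρ) - (1 - ρ*(1-q)) / ((1-ρ)^2 + 2*ρ*q))
      - ((R/2 - 2*L) * t + μ)/2 * (Real.log ((1-ρ)^2 + 2*ρ*q) - 2 * Real.log (1-ρ)) := by
  set a := 1 - ρ with ha
  have ha0 : 1/2 ≤ a := by linarith
  have ha1 : a ≤ 3/4 := by linarith
  set D := a^2 + 2*ρ*q with hD
  have hB : 0 ≤ B := (abs_nonneg _).trans hτ₁
  have hρq : 0 ≤ ρ * q := by positivity
  have hDa : a^2 ≤ D := by nlinarith
  have ha2 : 1/4 ≤ a^2 := by nlinarith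
  have hD0 : 1/4 ≤ D := by linarith
  have hD1 : D ≤ 9/4 := by
    have : D ≤ a^2 + 4*ρ := by nlinarith
    nlinarith
  have hDp : 0 < D := by linarith
  have hap : 0 < a := by linarith
  have hρp : 0 < ρ := by linarith
  obtain ⟨l, hl⟩ : ∃ l, l = Real.log D - 2 * Real.log a := ⟨_, rfl⟩
  have hl' : l = Real.log (D / a^2) := by
    rw [hl, Real.log_div hDp.ne' (by positivity), Real.log_pow]; norm_num
  have hlup : l ≤ 2*ρ*q/a^2 := by
    have := Real.log_le_sub_one_of_pos (x := D/a^2) (by positivity)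
    have e : D/a^2 - 1 = 2*ρ*q/a^2 := by rw [hD]; field_simp; ring
    rw [hl']; linarith
  have hllo : 2*ρ*q/D ≤ l := by
    have := Real.one_sub_inv_le_log_of_pos (x := D/a^2) (by positivity)
    have e : 1 - (D/a^2)⁻¹ = 2*ρ*q/D := by rw [inv_div]; field_simp; rw [hD]; ring
    rw [hl']; linarith
  have hl0 : 0 ≤ l := le_trans (by positivity) hllo
  have hl4 : l ≤ 4*q := by
    refine hlup.trans ?_
    rw [div_le_iff₀ (by positivity)]
    have h3 : 2*ρ ≤ 4*a^2 := by linarith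
    linarith [mul_le_mul_of_nonneg_right h3 hq]
  obtain ⟨E, hE⟩ : ∃ E, E = ρ*(1+ρ)/(a*D) := ⟨_, rfl⟩
  have hE0 : 0 ≤ E := by rw [hE]; positivity
  have hE6 : E ≤ 6 := by
    rw [hE, div_le_iff₀ (by positivity)]
    have : 1/8 ≤ a * D := by nlinarith
    nlinarith
  have hfrac : 1/a - (1 - ρ*(1-q))/D = q * E := by
    rw [hE]; field_simp
    rw [hD, ha]; ring
  rw [hfrac, ← hl]
  -- R part
  have hRp : q * (1/2 - ρ) / 4 ≤ 2*ρ*q - l/4 := by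
    have : 2*ρ*q/a^2 ≤ 4 * (2*ρ*q - q*(1/2-ρ)/4) := by
      rw [div_le_iff₀ (by positivity)]
      have h : 2*ρ ≤ 4 * (2*ρ - (1/2-ρ)/4) * a^2 := by
        rw [ha]
        have h10 : 0 ≤ -9*ρ^2+14*ρ-1 := by nlinarith only [h1, h2]
        have h11 : 0 ≤ (1/2-ρ) * (-9*ρ^2+14*ρ-1) := mul_nonneg (by linarith) h10
        linarith
      linarith [mul_le_mul_of_nonneg_left h hq]
    linarith
  have hLp : q * (1/2 - ρ) * 2 ≤ q/ρ - q * E + l := by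
    have key : q * (1/2 - ρ) * 2 ≤ q/ρ - q*E + 2*ρ*q/D := by
      have : q/ρ - q*E + 2*ρ*q/D = q * ((D*a - ρ^2*(1+ρ) + 2*ρ^2*a) / (ρ*a*D)) := by
        rw [hE]; field_simp
      rw [this, mul_assoc]
      refine mul_le_mul_of_nonneg_left ?_ hq
      rw [le_div_iff₀ (by positivity)]
      have h3 : a^2*a - ρ^2*(1+ρ) + 2*ρ^2*a = (1/2-ρ)*2*(1-ρ+2*ρ^2) := by rw [ha]; ring
      have h4 : ρ*a*D ≤ 7/8 := by
        have : ρ*a ≤ 1/4 := by rw [ha]; nlinarith only [sq_nonneg (ρ-1/2)]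
        nlinarith only [this, hD1, hDp]
      have h5 : 7/8 ≤ 1-ρ+2*ρ^2 := by nlinarith only [sq_nonneg (ρ-1/4)]
      have h6 : a^2*a ≤ D*a := mul_le_mul_of_nonneg_right hDa hap.le
      have h7 : 0 ≤ (1/2-ρ)*2 := by linarith
      have h8 := mul_le_mul_of_nonneg_left (h4.trans h5) h7
      linarith
    linarith
  -- errors
  have b1 := abs_le.1 hτ₁
  have b2 := abs_le.1 hτ₂
  have e1 : -(R*B) ≤ R*ρ*(τ₁+τ₂) := by
    have : 0 ≤ R*ρ := by positivity
    have h8 : R*ρ*(-(2*B)) ≤ R*ρ*(τ₁+τ₂) := mul_le_mul_of_nonneg_left (by linarith) this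
    have : R*ρ*B ≤ R*(1/2)*B := by gcongr
    linarith
  have e2 : -(4*L*B) ≤ L*τ₁/ρ := by
    rw [le_div_iff₀ hρp]
    have : L*(-B) ≤ L*τ₁ := mul_le_mul_of_nonneg_left (by linarith) hL
    have : L*B*(1/4) ≤ L*B*ρ := by gcongr
    linarith
  have e3 : -(6*L*B) ≤ -(L*τ₂*E) := by
    have h9 : L*E*τ₂ ≤ L*E*B := mul_le_mul_of_nonneg_left (by linarith) (by positivity)
    have : L*E*B ≤ L*6*B := by gcongr
    linarith
  have e4 : μ/2*l ≤ 2*B*q := by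
    have : μ/2*l ≤ B/2*l := by gcongr
    have : B/2*l ≤ B/2*(4*q) := by gcongr
    linarith
  have m1 := mul_le_mul_of_nonneg_left hRp (mul_nonneg ht hR)
  have m2 := mul_le_mul_of_nonneg_left hLp (mul_nonneg ht hL)
  have m3 := mul_le_mul_of_nonneg_left e1 hq
  have m4 := mul_le_mul_of_nonneg_left e2 hq
  have m5 := mul_le_mul_of_nonneg_left e3 hq
  have : q * (R * ρ * ((t+τ₁) + (t+τ₂)) + L * (t+τ₁) / ρ) = t*R*(2*ρ*q) + t*L*(q/ρ) + q*(R*ρ*(τ₁+τ₂)) + q*(L*τ₁/ρ) := by ring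
  rw [this]
  linarith

lemma aux_log_s18 (e : ℝ) (h0 : 0 ≤ e) (h1 : e ≤ 1/2) :
    |Real.log (1+e) - e + e^2/2| ≤ 2*e^3 ∧ |Real.log (1-e) + e + e^2/2| ≤ 2*e^3 := by
  have hh : e^3/(1-e) ≤ 2*e^3 := by
    rw [div_le_iff₀ (by linarith)]
    have : 0 ≤ e^3 := by positivity
    nlinarith
  constructor
  · have := Real.abs_log_sub_add_sum_range_le (x := -e) (by rw [abs_neg, abs_of_nonneg h0]; linarith) 2
    simp [Finset.sum_range_succ, abs_of_nonneg h0] at this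
    norm_num at this
    refine le_trans (le_of_eq ?_) (this.trans hh)
    congr 1; ring
  · have := Real.abs_log_sub_add_sum_range_le (x := e) (by rw [abs_of_nonneg h0]; linarith) 2
    simp [Finset.sum_range_succ, abs_of_nonneg h0] at this
    norm_num at this
    refine le_trans (le_of_eq ?_) (this.trans hh)
    congr 1; ring

/-- bound at the (shifted) critical point -/
lemma aux_value (R L e M b P K ℓ t τ₁ τ₂ ν s₁ s₂ f₁ f₂ : ℝ) (hR : 0 ≤ R) (hL : 0 ≤ L)
    (hM : 1 ≤ M) (hb : 1 ≤ b) (he : e * M = 2 * b) (he2 : e ≤ 1/2)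
    (hP : 0 ≤ P) (hK : 0 ≤ K) (ht : t = P * M^3) (hτ₁ : |τ₁| ≤ K * M^2) (hτ₂ : |τ₂| ≤ K * M^2)
    (hν : |ν| ≤ K * M^2) (hℓ : 0 < ℓ) (hs₁ : -ℓ ≤ s₁) (hs₂ : -ℓ ≤ s₂) (hf₁ : 0 ≤ f₁) (hf₁' : f₁ ≤ 1)
    (hf₂ : 0 ≤ f₂) (hf₂' : f₂ ≤ 1) :
    Real.log 2 - R * ((t+τ₁)+(t+τ₂)) * e / 2 + 2*L*(t+τ₁)*(e/(1-e)) + 2*L*(t+τ₂)*(e/(1+e))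
      + (ν + (R/2-2*L)*(t+τ₂) - s₂*M - f₂) * Real.log (1+e)
      - (-ν + (R/2-2*L)*(t+τ₁) - s₁*M - f₁ + 1) * Real.log (1-e)
    ≤ (1 + 6*b*ℓ + 2 + 16*K*b^2 + R * (16*P*b^3 + 16*K*b^2) + 2*L*(64*P*b^3 + 48*K*b^2)) - (s₁ + s₂) := by
  have hMp : 0 < M := by linarith
  have e0 : 0 < e := by
    by_contra h
    push Not at h
    nlinarith
  obtain ⟨hp, hm⟩ := aux_log_s18 e e0.le he2
  set p := Real.log (1+e)
  set m := Real.log (1-e)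
  obtain ⟨hp1, hp2⟩ := abs_le.1 hp
  obtain ⟨hm1, hm2⟩ := abs_le.1 hm
  have e22 : e^2 ≤ e/2 := by nlinarith
  have e32 : e^3 ≤ e^2/2 := by nlinarith [sq_nonneg e]
  have e3p : 0 < e^3 := by positivity
  have pe : p ≤ e := by
    have := Real.log_le_sub_one_of_pos (x := 1+e) (by linarith); linarith
  have p2 : e/2 ≤ p := by
    have := Real.one_sub_inv_le_log_of_pos (x := 1+e) (by linarith)
    have h : e/2 ≤ 1 - (1+e)⁻¹ := by
      have : 1 - (1+e)⁻¹ = e/(1+e) := by field_simp; ring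
      rw [this, div_le_div_iff₀ (by norm_num) (by linarith)]; nlinarith
    linarith
  have me : m ≤ -e := by
    have := Real.log_le_sub_one_of_pos (x := 1-e) (by linarith); linarith
  have m2 : -(2*e) ≤ m := by linarith
  have hMM2 : e^2 * M^2 = 4*b^2 := by rw [← mul_pow, he]; ring
  have hMM3 : e^3 * M^3 = 8*b^3 := by rw [← mul_pow, he]; ring
  have te : t * e^3 = 8*P*b^3 := by rw [ht]; linear_combination P * hMM3
  have KM : K * M^2 * e^2 = 4*K*b^2 := by linear_combination K * hMM2
  have t0 : 0 ≤ t := by rw [ht]; positivity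
  -- generic: |x| ≤ K M^2, |y| ≤ c e^2
  have gen : ∀ x y c : ℝ, |x| ≤ K*M^2 → |y| ≤ c * e^2 → 0 ≤ c → x*y ≤ c * (4*K*b^2) := by
    intro x y c hx hy hc
    calc x*y ≤ |x*y| := le_abs_self _
      _ = |x| * |y| := abs_mul _ _
      _ ≤ (K*M^2)*(c*e^2) := by gcongr
      _ = _ := by rw [← KM]; ring
  -- s terms
  have hs2 : 0 ≤ s₂ + ℓ := by linarith
  have hs1 : 0 ≤ s₁ + ℓ := by linarith
  have S2 : -s₂*M*p ≤ 2*b*ℓ - s₂ := by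
    have h : b ≤ M*p := by linarith [mul_le_mul_of_nonneg_left p2 hMp.le]
    have h' : M*p ≤ 2*b := by linarith [mul_le_mul_of_nonneg_left pe hMp.le]
    have h3 := mul_nonneg hs2 (show 0 ≤ M*p - 1 by linarith)
    have h4 := mul_nonneg hℓ.le (show 0 ≤ 2*b - M*p by linarith)
    linarith
  have S1 : s₁*M*m ≤ 4*b*ℓ - s₁ := by
    have h : 2*b ≤ M*(-m) := by linarith [mul_le_mul_of_nonneg_left me hMp.le]
    have h' : M*(-m) ≤ 4*b := by linarith [mul_le_mul_of_nonneg_left m2 hMp.le]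
    have h3 := mul_nonneg hs1 (show 0 ≤ M*(-m) - 1 by linarith)
    have h4 := mul_nonneg hℓ.le (show 0 ≤ 4*b - M*(-m) by linarith)
    linarith
  have F : -f₂*p - (1-f₁)*m ≤ 1 := by
    have h3 := mul_nonneg hf₂ (show 0 ≤ p by linarith)
    have h4 := mul_nonneg (show 0 ≤ 1 - f₁ by linarith) (show 0 ≤ 1 + m by linarith)
    linarith
  have N : ν*(p+m) ≤ 4 * (4*K*b^2) := by
    refine gen _ _ _ hν ?_ (by norm_num)
    rw [abs_le]; constructor <;> linarith [sq_nonneg e]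
  have A1 : τ₂*(p-e) ≤ 4*(4*K*b^2) := by
    refine gen _ _ _ hτ₂ ?_ (by norm_num)
    rw [abs_le]; constructor <;> linarith [sq_nonneg e]
  have A2 : τ₁*(-(m+e)) ≤ 4*(4*K*b^2) := by
    refine gen _ _ _ hτ₁ ?_ (by norm_num)
    rw [abs_le]; constructor <;> linarith [sq_nonneg e]
  have q1 : e/(1+e) = e - e^2/(1+e) := by field_simp; ring
  have q2 : e/(1-e) = e + e^2/(1-e) := by
    have : (1-e) ≠ 0 := by linarith
    field_simp; ring
  have q1' : 0 ≤ e^2/(1+e) ∧ e^2/(1+e) ≤ e^2 := by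
    constructor
    · positivity
    · rw [div_le_iff₀ (by linarith)]; linarith
  have q2' : 0 ≤ e^2/(1-e) ∧ e^2/(1-e) ≤ 2*e^2 := by
    have : 0 < 1-e := by linarith
    constructor
    · positivity
    · rw [div_le_iff₀ this]; linarith [mul_nonneg (sq_nonneg e) (show 0 ≤ 1/2 - e by linarith)]
  have A3 : τ₂*(e/(1+e)-p) ≤ 6*(4*K*b^2) := by
    refine gen _ _ _ hτ₂ ?_ (by norm_num)
    rw [q1, abs_le]; constructor <;> linarith [sq_nonneg e, q1'.1, q1'.2]
  have A4 : τ₁*(e/(1-e)+m) ≤ 6*(4*K*b^2) := by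
    refine gen _ _ _ hτ₁ ?_ (by norm_num)
    rw [q2, abs_le]; constructor <;> linarith [sq_nonneg e, q2'.1, q2'.2]
  have B1 : t*(p-m-2*e) ≤ 4*(8*P*b^3) := by
    rw [← te]
    have : p-m-2*e ≤ 4*e^3 := by linarith
    linarith [mul_le_mul_of_nonneg_left this t0]
  have B2 : t*(e/(1+e)+e/(1-e)-p+m) ≤ 8*(8*P*b^3) := by
    rw [← te]
    have : e^2/(1-e) - e^2/(1+e) ≤ 4*e^3 := by
      have h : 0 < 1-e := by linarith
      have : e^2/(1-e) - e^2/(1+e) = 2*e^3/((1-e)*(1+e)) := by field_simp; ring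
      rw [this, div_le_iff₀ (by positivity)]
      have h3 : 1/2 ≤ (1-e)*(1+e) := by linarith
      linarith [mul_le_mul_of_nonneg_left h3 e3p.le]
    have : e/(1+e)+e/(1-e)-p+m ≤ 8*e^3 := by rw [q1, q2]; linarith
    linarith [mul_le_mul_of_nonneg_left this t0]
  have l2 : Real.log 2 ≤ 1 := by
    have := Real.log_le_sub_one_of_pos (x := 2) (by norm_num); linarith
  have R1 := mul_le_mul_of_nonneg_left (add_le_add (add_le_add A1 A2) B1) (show 0 ≤ R/2 by linarith)
  have L1 := mul_le_mul_of_nonneg_left (add_le_add (add_le_add A3 A4) B2) (show 0 ≤ 2*L by linarith)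
  linarith

lemma aux_gauss (k : ℝ) (hk : 0 < k) :
    ∫ φ in (0:ℝ)..(2*π), Real.exp (-(k * (1 + Real.cos φ))) ≤ Real.sqrt (π / (k * (2/π^2))) := by
  have hkp : 0 < k * (2/π^2) := by positivity
  rw [← integral_gaussian, intervalIntegral.integral_of_le (by positivity)]
  rw [← integral_sub_right_eq_self (fun x : ℝ => Real.exp (-(k * (2/π^2)) * x^2)) π]
  have hint : Integrable (fun x : ℝ => Real.exp (-(k * (2/π^2)) * (x-π)^2)) :=
    (integrable_exp_neg_mul_sq hkp).comp_sub_right π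
  calc _ ≤ ∫ φ in Set.Ioc 0 (2*π), Real.exp (-(k * (2/π^2)) * (φ-π)^2) := by
        apply setIntegral_mono_on
        · exact (Continuous.integrableOn_Icc (by fun_prop)).mono_set Set.Ioc_subset_Icc_self
        · exact hint.integrableOn
        · exact measurableSet_Ioc
        · intro x hx
          apply Real.exp_le_exp.2
          have h := Real.cos_le_one_sub_mul_cos_sq (x := x - π) (by rw [abs_le]; constructor <;> linarith [hx.1, hx.2])
          rw [Real.cos_sub_pi] at h
          have : k * (2/π^2*(x-π)^2) ≤ k * (1+Real.cos x) := by
            gcongr; linarith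
          linarith
    _ ≤ _ := by
        apply setIntegral_le_integral hint
        exact Filter.Eventually.of_forall fun x => (Real.exp_pos _).le

lemma aux_zpow (x : ℝ) (hx : 0 < x) (m : ℤ) : x ^ m = Real.exp (m * Real.log x) := by
  rw [← Real.rpow_intCast, Real.rpow_def_of_pos hx, mul_comm]

noncomputable def auxF (R L t₁ t₂ : ℝ) (m₁ m₂ : ℤ) (z : ℂ) : ℂ :=
  Complex.exp ((R * t₁ : ℝ) * (1 - z) + (L * t₁ : ℝ) / (1 - z) - (R * t₂ : ℝ) * z
    - (L * t₂ : ℝ) / z) * z ^ m₂ * (1 - z) ^ (-(m₁ + 1))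

lemma auxF_contour (R L t₁ t₂ : ℝ) (m₁ m₂ : ℤ) (r r' : ℝ) (h0 : 0 < r) (h1 : r ≤ r') (h2 : r' < 1) :
    ∮ z in C(1, r'), auxF R L t₁ t₂ m₁ m₂ z = ∮ z in C(1, r), auxF R L t₁ t₂ m₁ m₂ z := by
  have hd : ∀ z ∈ Metric.closedBall (1:ℂ) r' \ Metric.ball 1 r,
      DifferentiableAt ℂ (auxF R L t₁ t₂ m₁ m₂) z := by
    intro z hz
    have hz0 : z ≠ 0 := by
      rintro rfl
      have := hz.1
      simp at this
      linarith
    have hz1 : 1 - z ≠ 0 := by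
      intro h
      have : z = 1 := (sub_eq_zero.1 h).symm
      apply hz.2
      rw [this]; simpa using h0
    unfold auxF
    have d1 : DifferentiableAt ℂ (fun z : ℂ => z ^ m₂) z := differentiableAt_zpow.2 (Or.inl hz0)
    have d2 : DifferentiableAt ℂ (fun z : ℂ => (1 - z) ^ (-(m₁+1))) z :=
      DifferentiableAt.zpow (by fun_prop) (Or.inl hz1)
    refine (DifferentiableAt.mul ?_ d1).mul d2
    fun_prop (disch := assumption)
  refine Complex.circleIntegral_eq_of_differentiable_on_annulus_off_countable h0 h1
    Set.countable_empty (fun z hz => (hd z hz).continuousAt.continuousWithinAt) ?_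
  intro z hz
  exact hd z ⟨Metric.ball_subset_closedBall hz.1.1, fun h => hz.1.2 (Metric.ball_subset_closedBall h)⟩

lemma auxF_norm (R L t₁ t₂ : ℝ) (m₁ m₂ : ℤ) (ρ φ : ℝ) (h0 : 0 < ρ) (h1 : ρ < 1) :
    ‖auxF R L t₁ t₂ m₁ m₂ (circleMap 1 ρ φ)‖ = Real.exp (
      R * t₁ * (ρ * (-Real.cos φ)) + L * t₁ * (-Real.cos φ) / ρ
        - R * t₂ * (1 - ρ * (-Real.cos φ))
        - L * t₂ * ((1 - ρ * (-Real.cos φ)) / ((1-ρ)^2 + 2*ρ*(1 + Real.cos φ)))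
        + m₂ / 2 * Real.log ((1-ρ)^2 + 2*ρ*(1 + Real.cos φ)) - (m₁ + 1) * Real.log ρ) := by
  set z := circleMap 1 ρ φ with hz
  have hre : z.re = 1 + ρ * Real.cos φ := by
    simp [hz, circleMap, Complex.exp_re]
  have him : z.im = ρ * Real.sin φ := by
    simp [hz, circleMap, Complex.exp_im]
  have hsc := Real.sin_sq_add_cos_sq φ
  have hn : Complex.normSq z = (1-ρ)^2 + 2*ρ*(1 + Real.cos φ) := by
    rw [Complex.normSq_apply, hre, him]; linear_combination ρ^2 * hsc
  have hn1 : Complex.normSq (1 - z) = ρ^2 := by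
    rw [Complex.normSq_apply]; simp only [Complex.sub_re, Complex.sub_im, hre, him, Complex.one_re, Complex.one_im]
    linear_combination ρ^2 * hsc
  have hD : 0 < (1-ρ)^2 + 2*ρ*(1 + Real.cos φ) := by
    have : 0 < (1-ρ)^2 := by have : 0 < 1 - ρ := by linarith
                             positivity
    have : 0 ≤ 1 + Real.cos φ := by linarith [Real.neg_one_le_cos φ]
    positivity
  have hw : ‖1 - z‖ = ρ := by
    rw [Complex.norm_def, hn1, Real.sqrt_sq h0.le]
  have hzn : ‖z‖ = Real.sqrt ((1-ρ)^2 + 2*ρ*(1 + Real.cos φ)) := by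
    rw [Complex.norm_def, hn]
  unfold auxF
  rw [norm_mul, norm_mul, Complex.norm_exp, norm_zpow, norm_zpow, hw, hzn,
    aux_zpow _ (Real.sqrt_pos.2 hD), aux_zpow _ h0, ← Real.exp_add, ← Real.exp_add,
    Real.log_sqrt hD.le]
  congr 1
  have e1 : (((R * t₁ : ℝ) : ℂ) * (1 - z)).re = R * t₁ * (ρ * (-Real.cos φ)) := by
    rw [Complex.re_ofReal_mul]; simp [hre]
  have e2 : (((R * t₂ : ℝ) : ℂ) * z).re = R * t₂ * (1 - ρ * (-Real.cos φ)) := by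
    rw [Complex.re_ofReal_mul]; simp [hre]
  have e3 : (((L * t₁ : ℝ) : ℂ) / (1 - z)).re = L * t₁ * (-Real.cos φ) / ρ := by
    rw [div_eq_mul_inv, Complex.re_ofReal_mul, Complex.inv_re, hn1]
    simp only [Complex.sub_re, Complex.one_re, hre]; field_simp; ring
  have e4 : (((L * t₂ : ℝ) : ℂ) / z).re = L * t₂ * ((1 - ρ * (-Real.cos φ)) / ((1-ρ)^2 + 2*ρ*(1 + Real.cos φ))) := by
    rw [div_eq_mul_inv, Complex.re_ofReal_mul, Complex.inv_re, hn, hre]; ring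
  rw [Complex.sub_re, Complex.sub_re, Complex.add_re, e1, e2, e3, e4]
  push_cast
  ring

lemma aux_main (R L M b P K ℓ τ₁ τ₂ ν s₁ s₂ f₁ f₂ t₁ t₂ r : ℝ) (m₁ m₂ : ℤ) (hR : 0 ≤ R) (hL : 0 ≤ L)
    (hM : 1 ≤ M) (hb : 1 ≤ b) (hMb : 4 * b ≤ M)
    (hP : 0 ≤ P) (hK : 0 ≤ K) (hτ₁ : |τ₁| ≤ K * M^2) (hτ₂ : |τ₂| ≤ K * M^2)
    (hν : |ν| ≤ K * M^2) (hℓ : 0 < ℓ) (hs₁ : -ℓ ≤ s₁) (hs₂ : -ℓ ≤ s₂) (hf₁ : 0 ≤ f₁) (hf₁' : f₁ ≤ 1)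
    (hf₂ : 0 ≤ f₂) (hf₂' : f₂ ≤ 1)
    (ht₁ : t₁ = P * M^3 + τ₁) (ht₂ : t₂ = P * M^3 + τ₂)
    (hm₁ : (m₁ : ℝ) = -ν + (R/2-2*L)*t₁ - s₁*M - f₁)
    (hm₂ : (m₂ : ℝ) = ν + (R/2-2*L)*t₂ - s₂*M - f₂)
    (hμ : ν + (R/2-2*L)*τ₂ - s₂*M - f₂ ≤ K * M^2)
    (hbig : (R + 10*L + 2) * K + 1 ≤ P * b * ((R + 8*L)/4)) (hr0 : 0 < r) (hr1 : r < 1) :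
    ‖(2:ℂ) ^ (m₂ - m₁) * Complex.exp ((((t₂ - t₁) * (2*L + R/2) : ℝ) : ℂ)) * ((M : ℝ) : ℂ)
      * (2 * (Real.pi : ℂ) * Complex.I)⁻¹ * ∮ z in C(1, r), auxF R L t₁ t₂ m₁ m₂ z‖ ≤
    Real.exp (1 + 6*b*ℓ + 2 + 16*K*b^2 + R * (16*P*b^3 + 16*K*b^2) + 2*L*(64*P*b^3 + 48*K*b^2))
      * Real.sqrt (π / (2/π^2)) * Real.exp (-(s₁+s₂)) := by
  have hMp : 0 < M := by linarith
  obtain ⟨e, he⟩ : ∃ e, e = 2*b/M := ⟨_, rfl⟩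
  have heM : e * M = 2 * b := by rw [he]; field_simp
  have he2 : e ≤ 1/2 := by rw [he, div_le_iff₀ hMp]; linarith
  have he0 : 0 < e := by rw [he]; positivity
  obtain ⟨ρ, hρ⟩ : ∃ ρ, ρ = (1-e)/2 := ⟨_, rfl⟩
  have hρ1 : 1/4 ≤ ρ := by linarith
  have hρ2 : ρ ≤ 1/2 := by linarith
  have hρp : 0 < ρ := by linarith
  have hcont : ∮ z in C(1, r), auxF R L t₁ t₂ m₁ m₂ z = ∮ z in C(1, ρ), auxF R L t₁ t₂ m₁ m₂ z := by
    rcases le_total r ρ with h | h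
    · exact (auxF_contour R L t₁ t₂ m₁ m₂ r ρ hr0 h (by linarith)).symm
    · exact auxF_contour R L t₁ t₂ m₁ m₂ ρ r hρp h hr1
  rw [hcont]
  obtain ⟨G, hG⟩ : ∃ G, G = R * t₁ * ρ + L * t₁ / ρ - R * t₂ * (1-ρ) - L * t₂ * (1/(1-ρ))
      + m₂ * Real.log (1-ρ) - (m₁+1) * Real.log ρ := ⟨_, rfl⟩
  have hpt : ∀ φ : ℝ, ‖auxF R L t₁ t₂ m₁ m₂ (circleMap 1 ρ φ)‖ ≤
      Real.exp G * Real.exp (-(M^2 * (1 + Real.cos φ))) := by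
    intro φ
    rw [auxF_norm _ _ _ _ _ _ _ _ hρp (by linarith), ← Real.exp_add]
    apply Real.exp_le_exp.2
    have hq : 0 ≤ 1 + Real.cos φ := by linarith [Real.neg_one_le_cos φ]
    have hq2 : 1 + Real.cos φ ≤ 2 := by linarith [Real.cos_le_one φ]
    have key := aux_decay R L ρ (1 + Real.cos φ) (P * M^3) τ₁ τ₂ _ (K*M^2) hR hL hρ1 hρ2 hq hq2
      (by positivity) hτ₁ hτ₂ hμ
    rw [← ht₁, ← ht₂] at key
    have hm : (R/2 - 2*L) * (P * M^3) + (ν + (R/2-2*L)*τ₂ - s₂*M - f₂) = m₂ := by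
      rw [hm₂, ht₂]; ring
    rw [hm, show 1 - ρ * (1 - (1 + Real.cos φ)) = 1 - ρ * (-Real.cos φ) by ring] at key
    have h1 : M^2 ≤ P * M^3 * (1/2 - ρ) * ((R + 8*L)/4) - (R + 10*L + 2) * (K * M^2) := by
      have : P * M^3 * (1/2 - ρ) = P * b * M^2 := by
        rw [hρ]; linear_combination P * M^2 / 2 * heM
      rw [this]
      have := mul_le_mul_of_nonneg_right hbig (sq_nonneg M)
      linarith
    have h2 := mul_le_mul_of_nonneg_left h1 hq
    have h3 : L * t₁ * (-Real.cos φ) / ρ = L * t₁ / ρ - (1 + Real.cos φ) * (L * t₁ / ρ) := by ring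
    rw [hG, h3]
    linarith
  have hint : ‖∮ z in C(1, ρ), auxF R L t₁ t₂ m₁ m₂ z‖ ≤
      Real.exp G * (Real.sqrt (π / (2/π^2)) / M) := by
    have h1 : ‖∮ z in C(1, ρ), auxF R L t₁ t₂ m₁ m₂ z‖ ≤
        ∫ φ in (0:ℝ)..(2*π), Real.exp G * Real.exp (-(M^2 * (1 + Real.cos φ))) := by
      rw [circleIntegral]
      refine intervalIntegral.norm_integral_le_of_norm_le (by positivity) ?_ ?_
      · refine Filter.Eventually.of_forall fun φ _ => ?_
        rw [norm_smul]
        have : ‖deriv (circleMap 1 ρ) φ‖ ≤ 1 := by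
          rw [deriv_circleMap]; simp [abs_of_pos hρp]; linarith
        calc _ ≤ 1 * ‖auxF R L t₁ t₂ m₁ m₂ (circleMap 1 ρ φ)‖ := by gcongr
          _ ≤ _ := by rw [one_mul]; exact hpt φ
      · exact Continuous.intervalIntegrable (by fun_prop) _ _
    refine h1.trans ?_
    rw [intervalIntegral.integral_const_mul]
    gcongr
    refine (aux_gauss (M^2) (by positivity)).trans (le_of_eq ?_)
    rw [show π / (M^2 * (2/π^2)) = (π / (2/π^2)) / M^2 by field_simp,
      Real.sqrt_div' _ (by positivity), Real.sqrt_sq hMp.le]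
  have hval := aux_value R L e M b P K ℓ (P*M^3) τ₁ τ₂ ν s₁ s₂ f₁ f₂ hR hL hM hb heM he2 hP hK rfl
    hτ₁ hτ₂ hν hℓ hs₁ hs₂ hf₁ hf₁' hf₂ hf₂'
  rw [← ht₁, ← ht₂, ← hm₁, ← hm₂] at hval
  have h1e : (1 - e) ≠ 0 := by linarith
  have h1e' : (1 + e) ≠ 0 := by linarith
  have hlogρ : Real.log ρ = Real.log (1-e) - Real.log 2 := by
    rw [hρ, Real.log_div h1e (by norm_num)]
  have ha : 1 - ρ = (1+e)/2 := by rw [hρ]; ring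
  have hloga : Real.log (1-ρ) = Real.log (1+e) - Real.log 2 := by
    rw [ha, Real.log_div h1e' (by norm_num)]
  have hGv : ((m₂:ℝ) - m₁) * Real.log 2 + (t₂ - t₁) * (2*L + R/2) + G ≤
      (1 + 6*b*ℓ + 2 + 16*K*b^2 + R * (16*P*b^3 + 16*K*b^2) + 2*L*(64*P*b^3 + 48*K*b^2)) - (s₁ + s₂) := by
    refine le_trans (le_of_eq ?_) hval
    rw [hG, hlogρ, hloga, ha, hρ]
    field_simp
    ring
  have hn2 : ‖(2:ℂ) ^ (m₂ - m₁)‖ = Real.exp (((m₂:ℝ) - m₁) * Real.log 2) := by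
    rw [norm_zpow, Complex.norm_ofNat, aux_zpow _ (by norm_num)]; push_cast; rfl
  have hnpi : ‖(2 * (Real.pi : ℂ) * Complex.I)⁻¹‖ ≤ 1 := by
    rw [norm_inv]
    apply inv_le_one_of_one_le₀
    simp [abs_of_pos Real.pi_pos]
    linarith [Real.pi_gt_three]
  rw [norm_mul, norm_mul, norm_mul, norm_mul, hn2, Complex.norm_exp, Complex.ofReal_re,
    Complex.norm_real, Real.norm_of_nonneg hMp.le]
  calc _ ≤ Real.exp (((m₂:ℝ) - m₁) * Real.log 2) * Real.exp ((t₂ - t₁) * (2*L + R/2)) * M * 1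
        * (Real.exp G * (Real.sqrt (π / (2/π^2)) / M)) := by gcongr
    _ = Real.exp (((m₂:ℝ) - m₁) * Real.log 2 + (t₂ - t₁) * (2*L + R/2) + G) * Real.sqrt (π / (2/π^2)) := by
        rw [Real.exp_add, Real.exp_add]; field_simp
    _ ≤ Real.exp ((1 + 6*b*ℓ + 2 + 16*K*b^2 + R * (16*P*b^3 + 16*K*b^2) + 2*L*(64*P*b^3 + 48*K*b^2)) - (s₁ + s₂))
          * Real.sqrt (π / (2/π^2)) := by gcongr
    _ = _ := by rw [sub_eq_add_neg, Real.exp_add]; ring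

lemma aux_scale (M a p u : ℝ) (hM : 1 ≤ M) (ha : |a| ≤ 2) :
    |a * u * M^2 + (1/2) * p * u^2 * M| ≤ (2 * |u| + |p| * u^2) * M^2 := by
  have hMM : M ≤ M^2 := by nlinarith
  have hMp : 0 < M := by linarith
  calc _ ≤ |a * u * M^2| + |(1/2) * p * u^2 * M| := abs_add_le _ _
    _ = |a| * |u| * M^2 + (1/2) * |p| * u^2 * M := by
        simp only [abs_mul, abs_of_pos hMp, abs_pow, sq_abs]
        norm_num
    _ ≤ 2 * |u| * M^2 + 1 * |p| * u^2 * M^2 := by gcongr; norm_num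
    _ = _ := by ring

/-- bound on the conjugated, rescaled main term of the
flat-initial-condition PushASEP kernel: for fixed `u₁, u₂` and `ℓ > 0` there are
`C, T₀ > 0` such that for all `T ≥ T₀` and all `s₁, s₂ ≥ −ℓ` the term is bounded by
`C e^{−(s₁+s₂)}`. -/
theorem stmt18 (R L θ p₀ p₁ p₂ : ℝ) (hR : 0 ≤ R) (hL : 0 ≤ L)
    (hRL : 0 < 8*L + R) (hθ : 0 < θ) (hp₀ : θ ≤ p₀) (hp₁ : |p₁| ≤ 1)
    (hκ : 0 < (R + 4*L) * (p₁ + 1) + 4 * (1 - p₁))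
    (u₁ u₂ : ℝ) (ℓ : ℝ) (hℓ : 0 < ℓ) :
    ∃ C > (0 : ℝ), ∃ T₀ > (0 : ℝ), ∀ T ≥ T₀, ∀ s₁ s₂ : ℝ, -ℓ ≤ s₁ → -ℓ ≤ s₂ →
      ∀ r : ℝ, 0 < r → r < 1 →
      ‖(2 : ℂ) ^ (xscale R L θ p₀ p₁ p₂ T u₂ s₂ - xscale R L θ p₀ p₁ p₂ T u₁ s₁) *
          Complex.exp ((((tscale θ p₀ p₁ p₂ T u₂ - tscale θ p₀ p₁ p₂ T u₁)
              * (2*L + R/2) : ℝ) : ℂ)) *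
          ((T ^ ((1 : ℝ)/3) : ℝ) : ℂ) * (2 * (Real.pi : ℂ) * Complex.I)⁻¹ *
          ∮ z in C(1, r),
            Complex.exp ((R * tscale θ p₀ p₁ p₂ T u₁ : ℝ) * (1 - z)
                + (L * tscale θ p₀ p₁ p₂ T u₁ : ℝ) / (1 - z)
                - (R * tscale θ p₀ p₁ p₂ T u₂ : ℝ) * z
                - (L * tscale θ p₀ p₁ p₂ T u₂ : ℝ) / z) *
              z ^ (nscale θ p₀ p₁ p₂ T u₁ + nscale θ p₀ p₁ p₂ T u₂
                  + xscale R L θ p₀ p₁ p₂ T u₂ s₂) *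
              (1 - z) ^ (-(nscale θ p₀ p₁ p₂ T u₁ + nscale θ p₀ p₁ p₂ T u₂
                  + xscale R L θ p₀ p₁ p₂ T u₁ s₁ + 1))‖
        ≤ C * Real.exp (-(s₁ + s₂)) := by
  obtain ⟨hp1, hp2⟩ := abs_le.1 hp₁
  obtain ⟨P, hP⟩ : ∃ P, P = p₀ + θ := ⟨_, rfl⟩
  have hPp : 0 < P := by linarith
  obtain ⟨K₀, hK₀⟩ : ∃ K, K = (2 * |u₁| + |p₂| * u₁^2) + (2 * |u₂| + |p₂| * u₂^2) + 1 := ⟨_, rfl⟩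
  have k1 : 0 ≤ 2 * |u₁| + |p₂| * u₁^2 := by positivity
  have k2 : 0 ≤ 2 * |u₂| + |p₂| * u₂^2 := by positivity
  have hK₀p : 1 ≤ K₀ := by linarith
  obtain ⟨K, hK⟩ : ∃ K, K = K₀ + |R/2 - 2*L| * K₀ + ℓ := ⟨_, rfl⟩
  have hv : 0 ≤ |R/2 - 2*L| * K₀ := by positivity
  have hKK : K₀ ≤ K := by linarith
  have hKp : 0 ≤ K := by linarith
  have hc : 0 < P * ((R + 8*L)/4) := mul_pos hPp (by linarith)
  obtain ⟨b, hb⟩ : ∃ b, b = 1 + ((R + 10*L + 2) * K + 1) / (P * ((R + 8*L)/4)) := ⟨_, rfl⟩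
  have hb1 : 1 ≤ b := by rw [hb]; have : 0 ≤ ((R + 10*L + 2) * K + 1) / (P * ((R + 8*L)/4)) := by positivity
                         linarith
  have hbig : (R + 10*L + 2) * K + 1 ≤ P * b * ((R + 8*L)/4) := by
    have : P * b * ((R + 8*L)/4) = P * ((R + 8*L)/4) + ((R + 10*L + 2) * K + 1) := by
      have h := mul_div_cancel₀ ((R + 10*L + 2) * K + 1) hc.ne'
      rw [hb]; linear_combination h
    linarith
  refine ⟨_, mul_pos (Real.exp_pos (1 + 6*b*ℓ + 2 + 16*K*b^2 + R * (16*P*b^3 + 16*K*b^2)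
    + 2*L*(64*P*b^3 + 48*K*b^2))) (Real.sqrt_pos.2 (show 0 < π / (2/π^2) by positivity)),
    (4*b)^3, by positivity, ?_⟩
  intro T hT s₁ s₂ hs₁ hs₂ r hr0 hr1
  have hT0 : 0 ≤ T := le_trans (by positivity) hT
  obtain ⟨M, hM⟩ : ∃ M, M = T ^ ((1:ℝ)/3) := ⟨_, rfl⟩
  have hM0 : 0 ≤ M := by rw [hM]; positivity
  have hM3 : M^3 = T := by
    rw [hM, ← Real.rpow_natCast, ← Real.rpow_mul hT0]; norm_num
  have hM2 : T ^ ((2:ℝ)/3) = M^2 := by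
    rw [hM, ← Real.rpow_natCast, ← Real.rpow_mul hT0]; norm_num
  have hMb : 4*b ≤ M := by
    rw [← hM3] at hT
    exact le_of_pow_le_pow_left₀ (by norm_num) hM0 hT
  have hM1 : 1 ≤ M := by linarith
  have hMM : M ≤ M^2 := by nlinarith
  have hM21 : 1 ≤ M^2 := by linarith
  have a1 := aux_scale M (-(p₁+1)) p₂ u₁ hM1 (by rw [abs_le]; constructor <;> linarith)
  have a2 := aux_scale M (-(p₁+1)) p₂ u₂ hM1 (by rw [abs_le]; constructor <;> linarith)
  have c1 := aux_scale M (1-p₁) p₂ u₁ hM1 (by rw [abs_le]; constructor <;> linarith)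
  have c2 := aux_scale M (1-p₁) p₂ u₂ hM1 (by rw [abs_le]; constructor <;> linarith)
  obtain ⟨τ₁, hτ₁⟩ : ∃ τ, τ = -(p₁+1) * u₁ * M^2 + (1/2) * p₂ * u₁^2 * M := ⟨_, rfl⟩
  obtain ⟨τ₂, hτ₂⟩ : ∃ τ, τ = -(p₁+1) * u₂ * M^2 + (1/2) * p₂ * u₂^2 * M := ⟨_, rfl⟩
  rw [← hτ₁] at a1
  rw [← hτ₂] at a2
  have ht₁ : tscale θ p₀ p₁ p₂ T u₁ = P * M^3 + τ₁ := by
    rw [tscale, hM2, ← hM, hτ₁, hP, hM3]; ring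
  have ht₂ : tscale θ p₀ p₁ p₂ T u₂ = P * M^3 + τ₂ := by
    rw [tscale, hM2, ← hM, hτ₂, hP, hM3]; ring
  have q1 : 0 ≤ (2 * |u₁| + |p₂| * u₁^2) * M^2 := by positivity
  have q2 : 0 ≤ (2 * |u₂| + |p₂| * u₂^2) * M^2 := by positivity
  have hKM : K₀ * M^2 = (2 * |u₁| + |p₂| * u₁^2) * M^2 + (2 * |u₂| + |p₂| * u₂^2) * M^2 + M^2 := by
    rw [hK₀]; ring
  have hKKM : K₀ * M^2 ≤ K * M^2 := by gcongr
  have b1 : |τ₁| ≤ K * M^2 := by linarith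
  have b20 : |τ₂| ≤ K₀ * M^2 := by linarith
  have b2 : |τ₂| ≤ K * M^2 := by linarith
  have fl1 := Int.floor_le ((p₀ - θ) * T + (1 - p₁) * u₁ * M^2 + (1/2) * p₂ * u₁^2 * M)
  have fl1' := Int.lt_floor_add_one ((p₀ - θ) * T + (1 - p₁) * u₁ * M^2 + (1/2) * p₂ * u₁^2 * M)
  have fl2 := Int.floor_le ((p₀ - θ) * T + (1 - p₁) * u₂ * M^2 + (1/2) * p₂ * u₂^2 * M)
  have fl2' := Int.lt_floor_add_one ((p₀ - θ) * T + (1 - p₁) * u₂ * M^2 + (1/2) * p₂ * u₂^2 * M)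
  have hn₁ : nscale θ p₀ p₁ p₂ T u₁ = ⌊(p₀ - θ) * T + (1 - p₁) * u₁ * M^2 + (1/2) * p₂ * u₁^2 * M⌋ := by
    rw [nscale, hM2, ← hM]
  have hn₂ : nscale θ p₀ p₁ p₂ T u₂ = ⌊(p₀ - θ) * T + (1 - p₁) * u₂ * M^2 + (1/2) * p₂ * u₂^2 * M⌋ := by
    rw [nscale, hM2, ← hM]
  rw [← hn₁] at fl1 fl1'
  rw [← hn₂] at fl2 fl2'
  have xl1 := Int.floor_le ((-2 : ℝ) * (nscale θ p₀ p₁ p₂ T u₁ : ℝ)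
    + (R/2 - 2*L) * tscale θ p₀ p₁ p₂ T u₁ - s₁ * M)
  have xl1' := Int.lt_floor_add_one ((-2 : ℝ) * (nscale θ p₀ p₁ p₂ T u₁ : ℝ)
    + (R/2 - 2*L) * tscale θ p₀ p₁ p₂ T u₁ - s₁ * M)
  have xl2 := Int.floor_le ((-2 : ℝ) * (nscale θ p₀ p₁ p₂ T u₂ : ℝ)
    + (R/2 - 2*L) * tscale θ p₀ p₁ p₂ T u₂ - s₂ * M)
  have xl2' := Int.lt_floor_add_one ((-2 : ℝ) * (nscale θ p₀ p₁ p₂ T u₂ : ℝ)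
    + (R/2 - 2*L) * tscale θ p₀ p₁ p₂ T u₂ - s₂ * M)
  have hx₁ : xscale R L θ p₀ p₁ p₂ T u₁ s₁ = ⌊(-2 : ℝ) * (nscale θ p₀ p₁ p₂ T u₁ : ℝ)
    + (R/2 - 2*L) * tscale θ p₀ p₁ p₂ T u₁ - s₁ * M⌋ := by rw [xscale, ← hM]
  have hx₂ : xscale R L θ p₀ p₁ p₂ T u₂ s₂ = ⌊(-2 : ℝ) * (nscale θ p₀ p₁ p₂ T u₂ : ℝ)
    + (R/2 - 2*L) * tscale θ p₀ p₁ p₂ T u₂ - s₂ * M⌋ := by rw [xscale, ← hM]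
  rw [← hx₁] at xl1 xl1'
  rw [← hx₂] at xl2 xl2'
  clear hn₁ hn₂ hx₁ hx₂
  rw [← hM]
  generalize nscale θ p₀ p₁ p₂ T u₁ = n₁ at *
  generalize nscale θ p₀ p₁ p₂ T u₂ = n₂ at *
  generalize xscale R L θ p₀ p₁ p₂ T u₁ s₁ = x₁ at *
  generalize xscale R L θ p₀ p₁ p₂ T u₂ s₂ = x₂ at *
  generalize tscale θ p₀ p₁ p₂ T u₁ = t₁ at *
  generalize tscale θ p₀ p₁ p₂ T u₂ = t₂ at *
  obtain ⟨c11, c12⟩ := abs_le.1 c1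
  obtain ⟨c21, c22⟩ := abs_le.1 c2
  have hν0 : |(n₁:ℝ) - n₂| ≤ K₀ * M^2 := by
    rw [abs_le]; constructor <;> linarith
  have hμ : ((n₁:ℝ) - n₂) + (R/2-2*L)*τ₂ - s₂*M
      - (-2 * (n₂:ℝ) + (R/2 - 2*L) * t₂ - s₂ * M - x₂) ≤ K * M^2 := by
    have h1 := le_abs_self ((n₁:ℝ) - n₂)
    have h2 : (R/2-2*L)*τ₂ ≤ |R/2-2*L| * (K₀ * M^2) := by
      refine (le_abs_self _).trans ?_
      rw [abs_mul]; gcongr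
    have h3 : -s₂*M ≤ ℓ * M^2 := by
      have : -s₂*M ≤ ℓ*M := by gcongr; linarith
      have : ℓ*M ≤ ℓ*M^2 := by gcongr
      linarith
    have h4 : K * M^2 = K₀ * M^2 + |R/2-2*L| * (K₀ * M^2) + ℓ * M^2 := by rw [hK]; ring
    linarith
  have main := aux_main R L M b P K ℓ τ₁ τ₂ ((n₁:ℝ) - n₂) s₁ s₂
    (-2 * (n₁:ℝ) + (R/2 - 2*L) * t₁ - s₁ * M - x₁) (-2 * (n₂:ℝ) + (R/2 - 2*L) * t₂ - s₂ * M - x₂)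
    t₁ t₂ r (n₁ + n₂ + x₁) (n₁ + n₂ + x₂) hR hL hM1 hb1 hMb hPp.le hKp b1 b2 (hν0.trans hKKM) hℓ hs₁ hs₂
    (by linarith) (by linarith) (by linarith) (by linarith) ht₁ ht₂
    (by push_cast; ring) (by push_cast; ring) hμ hbig hr0 hr1
  rw [show n₁ + n₂ + x₂ - (n₁ + n₂ + x₁) = x₂ - x₁ by ring] at main
  exact main
end
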